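/- For every real $0 < \varepsilon < \frac{1}{4}$ there exists $N = N(\varepsilon)$ such that every graph $G$ on $n \geq N$ vertices with spectral radius $\rho(G) > \sqrt{\lfloor n^2/4 \rfloor}$ contains a cycle of length $\ell$ for every integer $\ell \in [3, (\frac{1}{4} - \varepsilon) n]$. -/

import Mathlib

open SimpleGraph

attribute [local instance] Classical.propDecidable

noncomputable def specRad {V : Type*} [Fintype V] (G : SimpleGraph V) : ℝ :=
  sSup {μ : ℝ | Module.End.HasEigenvalue (Matrix.toLin' (G.adjMatrix ℝ)) μ}

/-!
Let `ρ = ρ(G)`, so that `2ρ` is almost at least `n`. Three cases cover all possible spectra.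

* All eigenvalues but one are at most `(1 - δ)ρ` in absolute value. The walks of a fixed length
  are then governed by the top eigenvector, so that between any two vertices carrying substantial
  weight in it a positive proportion of all sequences of `m` vertices are paths. A small set `R`
  therefore contains a path with `m` interior vertices between any two heavy vertices. The heavy
  vertices outside `R` still span almost `ρ²/2` edges, and a long path on them, which exists by the
  Erdős–Gallai theorem, closes up through `R` to a cycle of any prescribed length above `m`. Shorter
  cycles come from the trace of a power of the adjacency matrix.
* Two eigenvalues exceed `(1 - δ)ρ`. Some unit combination of their eigenvectors is orthogonal to
  the constants. Its positive and its negative part each miss a proportion of the vertices, and one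
  of them spans a subgraph with spectral radius at least `(1 - δ)ρ`, which has a spectral gap
  because it has too few vertices for a second large eigenvalue.
* Some eigenvalue is below `-(1 - δ)ρ`. The signs of its eigenvector show that `G` is
  close to a complete balanced bipartite graph, so it contains all even cycles of length up to
  `n/4`. If an odd one is missing, then `G` is bipartite apart from a few vertices of low degree.
  Summing `λ²(ρ + λ) ≥ 0` over the spectrum gives `2ρ³ ≤ ρ · 2e(G) + tr A³`, and hence
  `ρ² ≤ ⌊n²/4⌋`.
-/

open Finset

section Cycles

variable {V : Type*} {G H : SimpleGraph V}

/-- The graph `G` contains a cycle with exactly `ℓ` edges. -/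
def HasCycleOfLength (G : SimpleGraph V) (ℓ : ℕ) : Prop :=
  ∃ (v : V) (c : G.Walk v v), c.IsCycle ∧ c.length = ℓ

lemma HasCycleOfLength.mono {ℓ : ℕ} (hHG : H ≤ G) (h : HasCycleOfLength H ℓ) :
    HasCycleOfLength G ℓ := by
  obtain ⟨v, c, hc, hlen⟩ := h
  exact ⟨v, c.mapLe hHG, hc.mapLe hHG, by simp [hlen]⟩

lemma hasCycleOfLength_of_isChain (l : List V) (hchain : l.IsChain G.Adj) (hnodup : l.Nodup)
    (hlen : 3 ≤ l.length) (hne : l ≠ []) (hclose : G.Adj (l.getLast hne) (l.head hne)) :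
    HasCycleOfLength G l.length := by
  set p := Walk.ofSupport l hne hchain
  have hp : p.IsPath := by rwa [Walk.isPath_def, Walk.support_ofSupport]
  have hlength : p.length + 1 = l.length := by rw [← Walk.length_support, Walk.support_ofSupport]
  refine ⟨_, Walk.cons hclose p, ?_, by simpa using hlength⟩
  rw [Walk.isCycle_iff_isPath_tail_and_le_length]
  exact ⟨by simpa using hp, by simpa [hlength] using hlen⟩

end Cycles

section ErdosGallai

variable {V : Type*} {G : SimpleGraph V} {W W' : Finset V} {l : List V}

/-- The number of neighbours of `v` in `W`. -/
noncomputable def degreeIn (G : SimpleGraph V) (W : Finset V) (v : V) : ℕ :=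
  #{w ∈ W | G.Adj v w}

/-- The list `l` runs through the vertices of a path of `G` all of whose vertices lie in `W`;
the empty list is allowed. -/
structure IsPathIn (G : SimpleGraph V) (W : Finset V) (l : List V) : Prop where
  isChain : l.IsChain G.Adj
  nodup : l.Nodup
  subset : ∀ x ∈ l, x ∈ W

namespace IsPathIn

lemma mono (h : IsPathIn G W l) (hW : W ⊆ W') : IsPathIn G W' l :=
  ⟨h.isChain, h.nodup, fun x hx => hW (h.subset x hx)⟩

lemma cons {x : V} (h : IsPathIn G W l) (hx : x ∈ W) (hxl : x ∉ l)
    (hadj : ∀ y ∈ l.head?, G.Adj x y) : IsPathIn G W (x :: l) :=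
  ⟨List.isChain_cons.2 ⟨hadj, h.isChain⟩, List.nodup_cons.2 ⟨hxl, h.nodup⟩,
    List.forall_mem_cons.2 ⟨hx, h.subset⟩⟩

lemma cons_insert {x : V} (h : IsPathIn G W l) (hxl : x ∉ l) (hadj : ∀ y ∈ l.head?, G.Adj x y) :
    IsPathIn G (insert x W) (x :: l) :=
  (h.mono (subset_insert x W)).cons (mem_insert_self x W) hxl hadj

lemma reverse (h : IsPathIn G W l) : IsPathIn G W l.reverse :=
  ⟨List.isChain_reverse.2 (h.isChain.imp fun _ _ hab => hab.symm), List.nodup_reverse.2 h.nodup,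
    fun x hx => h.subset x (List.mem_reverse.1 hx)⟩

lemma append {l₁ l₂ : List V} (h₁ : IsPathIn G W l₁) (h₂ : IsPathIn G W l₂)
    (hdisj : l₁.Disjoint l₂) (hadj : ∀ x ∈ l₁.getLast?, ∀ y ∈ l₂.head?, G.Adj x y) :
    IsPathIn G W (l₁ ++ l₂) :=
  ⟨List.isChain_append.2 ⟨h₁.isChain, h₂.isChain, hadj⟩, h₁.nodup.append h₂.nodup hdisj,
    fun x hx => (List.mem_append.1 hx).elim (h₁.subset x) (h₂.subset x)⟩

lemma of_append {l₁ l₂ : List V} (h : IsPathIn G W (l₁ ++ l₂)) :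
    IsPathIn G W l₁ ∧ IsPathIn G W l₂ := by
  obtain ⟨hchain₁, hchain₂, -⟩ := List.isChain_append.1 h.isChain
  exact ⟨⟨hchain₁, h.nodup.of_append_left, fun x hx => h.subset x (List.mem_append_left _ hx)⟩,
    ⟨hchain₂, h.nodup.of_append_right, fun x hx => h.subset x (List.mem_append_right _ hx)⟩⟩

lemma length_le_card (h : IsPathIn G W l) : l.length ≤ #W := by
  rw [← List.toFinset_card_of_nodup h.nodup]
  exact card_le_card fun x hx => h.subset x (List.mem_toFinset.1 hx)

end IsPathIn

lemma exists_isPathIn_forall_length_le (G : SimpleGraph V) (W : Finset V) :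
    ∃ l, IsPathIn G W l ∧ ∀ l', IsPathIn G W l' → l'.length ≤ l.length := by
  let lengths : Set ℕ := {k | ∃ l, IsPathIn G W l ∧ l.length = k}
  have hne : lengths.Nonempty := ⟨0, [], ⟨by simp, by simp, by simp⟩, rfl⟩
  have hbdd : BddAbove lengths := ⟨#W, by rintro _ ⟨l, hl, rfl⟩; exact hl.length_le_card⟩
  obtain ⟨l, hl, hlen⟩ := Nat.sSup_mem hne hbdd
  exact ⟨l, hl, fun l' hl' => hlen ▸ le_csSup hbdd ⟨l', hl', rfl⟩⟩

lemma card_filter_le_countP {p : V → Prop} (h : ∀ x ∈ W, p x → x ∈ l) :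
    #{x ∈ W | p x} ≤ l.countP (fun x => p x) := by
  rw [List.countP_eq_length_filter]
  refine (card_le_card fun x hx => ?_).trans (List.toFinset_card_le _)
  obtain ⟨hxW, hpx⟩ := mem_filter.1 hx
  simpa [hpx] using h x hxW hpx

lemma exists_consecutive_of_length_lt_countP {p q : V → Prop} :
    ∀ (l : List V) (x : V),
      l.length < l.countP (fun v => p v) + (x :: l).dropLast.countP (fun v => q v) →
      ∃ l₁ y z l₂, x :: l = l₁ ++ y :: z :: l₂ ∧ q y ∧ p z
  | [], x, h => by simp at h
  | z :: t, x, h => by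
    by_cases hxz : q x ∧ p z
    · exact ⟨[], x, z, t, rfl, hxz⟩
    have hshort : t.length < t.countP (fun v => p v) + (z :: t).dropLast.countP (fun v => q v) := by
      simp only [List.length_cons, List.countP_cons, List.dropLast_cons_cons,
        decide_eq_true_eq] at h
      split_ifs at h <;> first | omega | exact absurd ⟨‹_›, ‹_›⟩ hxz
    obtain ⟨l₁, y, z', l₂, heq, hyz⟩ := exists_consecutive_of_length_lt_countP t z hshort
    exact ⟨x :: l₁, y, z', l₂, by rw [heq, List.cons_append], hyz⟩

lemma IsPathIn.exists_extension_of_closed {c : List V} (h : IsPathIn G W c)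
    (hclosed : ∀ x ∈ c.getLast?, ∀ y ∈ c.head?, G.Adj x y) {w x : V} (hw : w ∈ W) (hwc : w ∉ c)
    (hx : x ∈ c) (hwx : G.Adj w x) : ∃ l, IsPathIn G W l ∧ l.length = c.length + 1 := by
  obtain ⟨c₁, c₂, rfl⟩ := List.append_of_mem hx
  obtain ⟨h₁, h₂⟩ := h.of_append
  have hrot : IsPathIn G W (x :: c₂ ++ c₁) := by
    refine h₂.append h₁ (List.disjoint_of_nodup_append h.nodup).symm fun a ha b hb => ?_
    refine hclosed a ?_ b ?_
    · rw [List.getLast?_append, ha]; rfl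
    · rw [List.head?_append, hb]; rfl
  refine ⟨w :: (x :: c₂ ++ c₁), hrot.cons hw ?_ (by simpa using hwx), by simp; omega⟩
  exact fun hmem => hwc (List.perm_append_comm.mem_iff.1 hmem)

lemma IsPathIn.exists_closed_perm {x : V} {t : List V} (h : IsPathIn G W (x :: t))
    (hhead : ∀ y ∈ W, G.Adj x y → y ∈ x :: t)
    (hlast : ∀ y ∈ W, G.Adj ((x :: t).getLast (by simp)) y → y ∈ x :: t)
    (hdeg : t.length < degreeIn G W x + degreeIn G W ((x :: t).getLast (by simp))) :
    ∃ c, c.Perm (x :: t) ∧ IsPathIn G W c ∧ ∀ a ∈ c.getLast?, ∀ b ∈ c.head?, G.Adj a b := by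
  set z := (x :: t).getLast (by simp) with hz
  have hx : degreeIn G W x ≤ t.countP (fun v => G.Adj x v) :=
    card_filter_le_countP fun y hy hxy =>
      (List.mem_cons.1 (hhead y hy hxy)).resolve_left hxy.ne'
  have hz' : degreeIn G W z ≤ (x :: t).dropLast.countP (fun v => G.Adj z v) := by
    refine card_filter_le_countP fun y hy hzy => ?_
    have hmem := hlast y hy hzy
    rw [← List.dropLast_append_getLast (l := x :: t) (by simp), List.mem_append,
      List.mem_singleton] at hmem
    exact hmem.resolve_right hzy.ne'
  obtain ⟨l₁, a, b, l₂, heq, hza, hxb⟩ :=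
    exists_consecutive_of_length_lt_countP t x (hdeg.trans_le (add_le_add hx hz'))
  have hsplit : x :: t = (l₁ ++ [a]) ++ b :: l₂ := by simp [heq]
  rw [hsplit] at h
  obtain ⟨h₁, h₂⟩ := h.of_append
  have hhead₁ : (l₁ ++ [a]).head? = some x := by
    have := congrArg List.head? hsplit
    cases l₁ <;> simp_all
  have hlast₂ : (b :: l₂).getLast? = some z := by
    rw [hz]
    simp [hsplit, List.getLast?_eq_some_getLast]
  refine ⟨(l₁ ++ [a]).reverse ++ b :: l₂, ?_, h₁.reverse.append h₂ ?_ ?_, ?_⟩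
  · rw [hsplit]; exact (List.reverse_perm _).append_right _
  · intro v hv; exact List.disjoint_of_nodup_append h.nodup (List.mem_reverse.1 hv)
  · rw [List.getLast?_reverse, hhead₁]; simpa using hxb
  · rw [List.getLast?_append, hlast₂]; simpa using hza

/-- A longest path that is not spanning can be rearranged into a cycle on the same vertices, which
no outside vertex can be adjacent to. -/
lemma IsPathIn.mem_of_adj_of_forall_length_le {M : ℕ} (h : IsPathIn G W l)
    (hlen : l.length ≤ M + 1) (hmax : ∀ l', IsPathIn G W l' → l'.length ≤ l.length)
    (hdeg : ∀ u ∈ W, M < 2 * degreeIn G W u) {x w : V} (hx : x ∈ l) (hw : w ∈ W)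
    (hwx : G.Adj w x) : w ∈ l := by
  by_contra hwl
  have hmem_head : ∀ l', IsPathIn G W l' → l'.length = l.length → ∀ a ∈ l'.head?, ∀ y ∈ W,
      G.Adj a y → y ∈ l' := by
    intro l' hl' hlen' a ha y hy hay
    by_contra hyl
    have := hmax _ (hl'.cons hy hyl fun b hb => by
      obtain rfl : a = b := Option.some.inj (ha.symm.trans hb)
      exact hay.symm)
    simp only [List.length_cons] at this; omega
  obtain _ | ⟨a, t⟩ := l
  · simp at hx
  have hlast : ∀ y ∈ W, G.Adj ((a :: t).getLast (by simp)) y → y ∈ a :: t := fun y hy hay =>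
    List.mem_reverse.1 <| hmem_head _ h.reverse (by simp) _
      (by rw [List.head?_reverse, List.getLast?_eq_some_getLast]; rfl) y hy hay
  have hdeg_head := hdeg a (h.subset a (by simp))
  have hdeg_last := hdeg _ (h.subset _ (List.getLast_mem (l := a :: t) (by simp)))
  simp only [List.length_cons] at hlen
  obtain ⟨c, hperm, hc, hclosed⟩ := h.exists_closed_perm
    (hmem_head _ h rfl a rfl) hlast (by omega)
  obtain ⟨l', hl', hlen'⟩ := hc.exists_extension_of_closed hclosed hw
    (by rwa [hperm.mem_iff]) (hperm.mem_iff.2 hx) hwx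
  have := hmax l' hl'
  have := hperm.length_eq
  omega

lemma card_interedges_self_le (G : SimpleGraph V) (W : Finset V) :
    #(G.interedges W W) ≤ (#W - 1) * #W := by
  have hsub : G.interedges W W ⊆ W.offDiag := fun e he => by
    obtain ⟨h₁, h₂, hadj⟩ := G.mem_interedges_iff.1 he
    exact mem_offDiag.2 ⟨h₁, h₂, hadj.ne⟩
  exact (card_le_card hsub).trans (by rw [offDiag_card, Nat.sub_mul, one_mul])

lemma card_interedges_le_erase (G : SimpleGraph V) (W : Finset V) (u : V) :
    #(G.interedges W W) ≤ #(G.interedges (W.erase u) (W.erase u)) + 2 * degreeIn G W u := by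
  have hsub : G.interedges W W ⊆ G.interedges (W.erase u) (W.erase u) ∪
      ({w ∈ W | G.Adj u w}.image (fun w => (u, w)) ∪
        {w ∈ W | G.Adj u w}.image (fun w => (w, u))) := by
    rintro ⟨a, b⟩ he
    obtain ⟨ha, hb, hadj⟩ := G.mk_mem_interedges_iff.1 he
    simp only [mem_union, G.mk_mem_interedges_iff, mem_erase, mem_image, mem_filter, Prod.mk.injEq]
    by_cases hau : a = u
    · subst hau; exact .inr (.inl ⟨b, ⟨hb, hadj⟩, rfl, rfl⟩)
    by_cases hbu : b = u
    · subst hbu; exact .inr (.inr ⟨a, ⟨ha, hadj.symm⟩, rfl, rfl⟩)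
    · exact .inl ⟨⟨hau, ha⟩, ⟨hbu, hb⟩, hadj⟩
  refine (card_le_card hsub).trans ((card_union_le _ _).trans (Nat.add_le_add_left ?_ _))
  rw [two_mul]
  exact (card_union_le _ _).trans (add_le_add card_image_le card_image_le)

lemma card_interedges_le_sdiff {P : Finset V} (h : ∀ x ∈ P, ∀ w ∈ W, G.Adj w x → w ∈ P) :
    #(G.interedges W W) ≤ #(G.interedges P P) + #(G.interedges (W \ P) (W \ P)) := by
  refine (card_le_card ?_).trans (card_union_le _ _)
  rintro ⟨a, b⟩ he
  obtain ⟨ha, hb, hadj⟩ := G.mk_mem_interedges_iff.1 he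
  have := h a
  have := h b
  simp only [mem_union, G.mk_mem_interedges_iff, mem_sdiff]
  grind [G.adj_comm a b]

/-- The Erdős–Gallai theorem; `interedges W W` counts every edge inside `W` twice. -/
theorem exists_isPathIn_of_mul_card_lt {M : ℕ} (h : M * #W < #(G.interedges W W)) :
    ∃ l, IsPathIn G W l ∧ M + 2 ≤ l.length := by
  induction W using Finset.strongInduction with
  | H W ih =>
  by_cases hlow : ∃ u ∈ W, 2 * degreeIn G W u ≤ M
  · obtain ⟨u, hu, hdeg⟩ := hlow
    obtain ⟨l, hl, hlen⟩ := ih (W.erase u) (erase_ssubset hu) (by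
      rw [← card_erase_add_one hu, mul_add_one] at h
      have := card_interedges_le_erase G W u
      omega)
    exact ⟨l, hl.mono (erase_subset u W), hlen⟩
  push Not at hlow
  obtain ⟨l, hl, hmax⟩ := exists_isPathIn_forall_length_le G W
  by_contra! hshort
  have hsub : l.toFinset ⊆ W := fun x hx => hl.subset x (List.mem_toFinset.1 hx)
  have hcard := List.toFinset_card_of_nodup hl.nodup
  have hl_pos : 0 < l.length := by
    obtain ⟨w, hw⟩ : W.Nonempty := by
      rw [nonempty_iff_ne_empty]; rintro rfl; simp at h
    exact hmax [w] ⟨by simp, by simp, by simpa using hw⟩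
  have hsplit := card_interedges_le_sdiff (G := G) (W := W) (P := l.toFinset)
    fun x hx w hw hwx => List.mem_toFinset.2 <|
      hl.mem_of_adj_of_forall_length_le (Nat.le_of_lt_succ (hshort l hl)) hmax hlow
        (List.mem_toFinset.1 hx) hw hwx
  have hinside : #(G.interedges l.toFinset l.toFinset) ≤ M * #l.toFinset :=
    (card_interedges_self_le G _).trans (Nat.mul_le_mul_right _ (by have := hshort l hl; omega))
  obtain ⟨l', hl', hlen'⟩ := ih (W \ l.toFinset)
    (sdiff_ssubset hsub (card_pos.1 (hcard ▸ hl_pos))) (by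
      rw [← card_sdiff_add_card_eq_card hsub, mul_add] at h
      omega)
  exact absurd (hshort l' (hl'.mono sdiff_subset)) (by omega)

end ErdosGallai

section HermitianPowers

open Matrix

variable {n : Type*} [Fintype n] [DecidableEq n] {A : Matrix n n ℝ} (hA : A.IsHermitian)

lemma pow_eq_eigenvectorUnitary_mul (k : ℕ) :
    A ^ k = (hA.eigenvectorUnitary : Matrix n n ℝ) * diagonal (hA.eigenvalues ^ k) *
      star (hA.eigenvectorUnitary : Matrix n n ℝ) := by
  conv_lhs => rw [hA.spectral_theorem]
  rw [← map_pow, diagonal_pow, Unitary.conjStarAlgAut_apply]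
  rfl

lemma pow_apply_eq_sum_eigenvalues (k : ℕ) (u v : n) :
    (A ^ k) u v =
      ∑ i, hA.eigenvalues i ^ k * (hA.eigenvectorBasis i u * hA.eigenvectorBasis i v) := by
  rw [pow_eq_eigenvectorUnitary_mul hA, mul_apply]
  refine sum_congr rfl fun i _ => ?_
  simp only [mul_diagonal, star_apply, IsHermitian.eigenvectorUnitary_apply, Pi.pow_apply,
    star_trivial]
  ring

lemma dotProduct_pow_mulVec_eq_sum_eigenvalues (k : ℕ) (f : n → ℝ) :
    f ⬝ᵥ (A ^ k *ᵥ f) = ∑ i, hA.eigenvalues i ^ k * (⇑(hA.eigenvectorBasis i) ⬝ᵥ f) ^ 2 := by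
  simp only [dotProduct, mulVec, pow_apply_eq_sum_eigenvalues hA, sum_mul, mul_sum, sq]
  simp_rw [fun u => sum_comm (s := univ) (t := univ)
    (f := fun v i => f u * (hA.eigenvalues i ^ k *
      (hA.eigenvectorBasis i u * hA.eigenvectorBasis i v) * f v))]
  rw [sum_comm]
  refine sum_congr rfl fun i _ => ?_
  rw [sum_comm]
  exact sum_congr rfl fun u _ => sum_congr rfl fun v _ => by ring

end HermitianPowers

lemma sum_sum_adjMatrix_eq_card_interedges {V : Type*} (G : SimpleGraph V)
    (A B : Finset V) :
    ∑ u ∈ A, ∑ v ∈ B, G.adjMatrix ℝ u v = #(G.interedges A B) := by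
  rw [interedges_def, card_filter, sum_product]
  simp [adjMatrix_apply]

section AdjacencySpectrum

open Matrix

variable {V : Type*} [Fintype V] (G : SimpleGraph V)

/-- The eigenvalues of the adjacency matrix with multiplicity, indexed by the vertices in an
arbitrary way. -/
noncomputable def adjEigenvalue (i : V) : ℝ :=
  (G.isHermitian_adjMatrix ℝ).eigenvalues i

/-- A unit eigenvector of the adjacency matrix for `adjEigenvalue G i`; together these vectors form
an orthonormal basis. -/
noncomputable def adjEigenvector (i : V) : V → ℝ :=
  (G.isHermitian_adjMatrix ℝ).eigenvectorBasis i

lemma adjMatrix_pow_apply_eq_sum (k : ℕ) (u v : V) :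
    (G.adjMatrix ℝ ^ k) u v =
      ∑ i, adjEigenvalue G i ^ k * (adjEigenvector G i u * adjEigenvector G i v) :=
  pow_apply_eq_sum_eigenvalues _ k u v

lemma dotProduct_adjMatrix_pow_mulVec (k : ℕ) (f : V → ℝ) :
    f ⬝ᵥ (G.adjMatrix ℝ ^ k *ᵥ f) =
      ∑ i, adjEigenvalue G i ^ k * (adjEigenvector G i ⬝ᵥ f) ^ 2 :=
  dotProduct_pow_mulVec_eq_sum_eigenvalues _ k f

lemma dotProduct_adjMatrix_mulVec (f : V → ℝ) :
    f ⬝ᵥ (G.adjMatrix ℝ *ᵥ f) = ∑ i, adjEigenvalue G i * (adjEigenvector G i ⬝ᵥ f) ^ 2 := by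
  simpa using dotProduct_adjMatrix_pow_mulVec G 1 f

lemma dotProduct_self_eq_sum_adjEigenvector (f : V → ℝ) :
    f ⬝ᵥ f = ∑ i, (adjEigenvector G i ⬝ᵥ f) ^ 2 := by
  simpa using dotProduct_adjMatrix_pow_mulVec G 0 f

lemma adjEigenvector_dotProduct (i j : V) :
    adjEigenvector G i ⬝ᵥ adjEigenvector G j = if i = j then 1 else 0 := by
  have := orthonormal_iff_ite.1 (G.isHermitian_adjMatrix ℝ).eigenvectorBasis.orthonormal j i
  simpa [EuclideanSpace.inner_eq_star_dotProduct, eq_comm, adjEigenvector] using this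

lemma adjMatrix_mulVec_adjEigenvector (i : V) :
    G.adjMatrix ℝ *ᵥ adjEigenvector G i = adjEigenvalue G i • adjEigenvector G i :=
  (G.isHermitian_adjMatrix ℝ).mulVec_eigenvectorBasis i

lemma setOf_hasEigenvalue_adjMatrix :
    {μ : ℝ | Module.End.HasEigenvalue (toLin' (G.adjMatrix ℝ)) μ} =
      Set.range (adjEigenvalue G) := by
  ext μ
  rw [Set.mem_ofPred_eq, Module.End.hasEigenvalue_iff_mem_spectrum, spectrum_toLin',
    (G.isHermitian_adjMatrix ℝ).spectrum_real_eq_range_eigenvalues]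
  rfl

lemma adjEigenvalue_le_specRad (i : V) : adjEigenvalue G i ≤ specRad G := by
  rw [specRad, setOf_hasEigenvalue_adjMatrix]
  exact le_csSup (Set.finite_range _).bddAbove ⟨i, rfl⟩

lemma exists_adjEigenvalue_eq_specRad [Nonempty V] : ∃ i, adjEigenvalue G i = specRad G := by
  rw [specRad, setOf_hasEigenvalue_adjMatrix]
  exact (Set.range_nonempty _).csSup_mem (Set.finite_range _)

lemma dotProduct_adjMatrix_mulVec_le (f : V → ℝ) :
    f ⬝ᵥ (G.adjMatrix ℝ *ᵥ f) ≤ specRad G * (f ⬝ᵥ f) := by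
  rw [dotProduct_adjMatrix_mulVec, dotProduct_self_eq_sum_adjEigenvector G, mul_sum]
  exact sum_le_sum fun i _ =>
    mul_le_mul_of_nonneg_right (adjEigenvalue_le_specRad G i) (sq_nonneg _)

lemma abs_dotProduct_adjMatrix_mulVec_le (f : V → ℝ) :
    |f ⬝ᵥ (G.adjMatrix ℝ *ᵥ f)| ≤ |f| ⬝ᵥ (G.adjMatrix ℝ *ᵥ |f|) := by
  simp only [dotProduct_mulVec_adjMatrix]
  refine (abs_sum_le_sum_abs _ _).trans (sum_le_sum fun u _ => ?_)
  refine (abs_sum_le_sum_abs _ _).trans (sum_le_sum fun v _ => ?_)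
  split_ifs <;> simp [abs_mul]

lemma dotProduct_adjMatrix_mulVec_adjEigenvector (i : V) :
    adjEigenvector G i ⬝ᵥ (G.adjMatrix ℝ *ᵥ adjEigenvector G i) = adjEigenvalue G i := by
  simp [adjMatrix_mulVec_adjEigenvector, adjEigenvector_dotProduct]

lemma abs_adjEigenvalue_le_specRad (i : V) : |adjEigenvalue G i| ≤ specRad G := by
  have hunit : |adjEigenvector G i| ⬝ᵥ |adjEigenvector G i| = 1 := by
    have := adjEigenvector_dotProduct G i i
    simpa [dotProduct] using this
  have := (abs_dotProduct_adjMatrix_mulVec_le G _).trans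
    (dotProduct_adjMatrix_mulVec_le G |adjEigenvector G i|)
  rwa [dotProduct_adjMatrix_mulVec_adjEigenvector, hunit, mul_one] at this

lemma specRad_nonneg : 0 ≤ specRad G := by
  rcases isEmpty_or_nonempty V with _ | ⟨⟨v⟩⟩
  · simp [specRad, setOf_hasEigenvalue_adjMatrix, Set.range_eq_empty]
  · exact (abs_nonneg _).trans (abs_adjEigenvalue_le_specRad G v)

lemma trace_adjMatrix_pow (k : ℕ) :
    trace (G.adjMatrix ℝ ^ k) = ∑ i, adjEigenvalue G i ^ k := by
  simp only [trace, diag_apply, adjMatrix_pow_apply_eq_sum]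
  rw [sum_comm]
  refine sum_congr rfl fun i _ => ?_
  rw [← mul_sum]
  have := adjEigenvector_dotProduct G i i
  simp_all [dotProduct]

lemma degree_eq_sum_adjEigenvalue_sq (u : V) :
    (G.degree u : ℝ) = ∑ i, adjEigenvalue G i ^ 2 * adjEigenvector G i u ^ 2 := by
  rw [← G.adjMatrix_mul_self_apply_self, ← sq, adjMatrix_pow_apply_eq_sum]
  simp only [sq]

lemma indicator_dotProduct_adjMatrix_mulVec (A : Finset V) :
    (A : Set V).indicator 1 ⬝ᵥ (G.adjMatrix ℝ *ᵥ (A : Set V).indicator 1) =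
      (#(G.interedges A A) : ℝ) := by
  rw [← sum_sum_adjMatrix_eq_card_interedges]
  simp [dotProduct, mulVec, Set.indicator_apply]

lemma card_interedges_self_le_specRad_mul (W : Finset V) :
    (#(G.interedges W W) : ℝ) ≤ specRad G * #W := by
  have := dotProduct_adjMatrix_mulVec_le G ((W : Set V).indicator 1)
  rw [indicator_dotProduct_adjMatrix_mulVec] at this
  simpa [dotProduct, Set.indicator_apply] using this

lemma card_interedges_univ_eq_sum_adjEigenvalue_sq :
    (#(G.interedges univ univ) : ℝ) = ∑ i, adjEigenvalue G i ^ 2 := by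
  rw [← trace_adjMatrix_pow, ← sum_sum_adjMatrix_eq_card_interedges, trace]
  simp only [sq, diag_apply, adjMatrix_mul_self_apply_self, ← card_neighborFinset_eq_degree,
    neighborFinset_eq_filter, adjMatrix_apply, sum_boole]

end AdjacencySpectrum

section Links

variable {V : Type*} [Fintype V] {G : SimpleGraph V}

lemma adjMatrix_pow_apply_eq_card_isChain (G : SimpleGraph V) (m : ℕ) (u v : V) :
    (G.adjMatrix ℝ ^ (m + 1)) u v =
      #{g : Fin m → V | (u :: (List.ofFn g ++ [v])).IsChain G.Adj} := by
  rw [natCast_card_filter]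
  induction m generalizing u with
  | zero => simp [adjMatrix_apply]
  | succ m ih =>
    rw [pow_succ', Matrix.mul_apply, ← (Fin.consEquiv fun _ : Fin (m + 1) => V).sum_comp,
      Fintype.sum_prod_type]
    refine sum_congr rfl fun w _ => ?_
    rw [ih w, adjMatrix_apply, mul_sum]
    refine sum_congr rfl fun g _ => ?_
    have hcons : List.ofFn (Fin.consEquiv (fun _ : Fin (m + 1) => V) (w, g)) = w :: List.ofFn g :=
      by simp [List.ofFn_succ, Fin.consEquiv]
    simp only [hcons, List.cons_append, List.isChain_cons_cons]
    by_cases huw : G.Adj u w <;> simp [huw]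

/-- The paths from `u` to `v` with `m` interior vertices, each given by the sequence of its interior
vertices. The endpoints may coincide, in which case the path closes up to a cycle. -/
noncomputable def linkSet (G : SimpleGraph V) (u v : V) (m : ℕ) : Finset (Fin m → V) :=
  {g | (u :: (List.ofFn g ++ [v])).IsChain G.Adj ∧ Function.Injective g ∧
    ∀ i, g i ≠ u ∧ g i ≠ v}

lemma mem_linkSet {u v : V} {m : ℕ} {g : Fin m → V} :
    g ∈ linkSet G u v m ↔ (u :: (List.ofFn g ++ [v])).IsChain G.Adj ∧ Function.Injective g ∧
      ∀ i, g i ≠ u ∧ g i ≠ v := by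
  simp [linkSet]

lemma card_le_pow_of_eq_of_eq_succAbove {m : ℕ} (i : Fin (m + 1)) (T : Finset (Fin (m + 1) → V))
    (h : ∀ g ∈ T, ∀ g' ∈ T, (∀ k, g (i.succAbove k) = g' (i.succAbove k)) → g i = g' i) :
    #T ≤ Fintype.card V ^ m := by
  have hcard : #(univ : Finset (Fin m → V)) = Fintype.card V ^ m := by simp
  rw [← hcard]
  refine card_le_card_of_injOn (fun g k => g (i.succAbove k)) (fun _ _ => mem_univ _) ?_
  intro g hg g' hg' hgg'
  funext j
  rcases Fin.eq_self_or_eq_succAbove i j with rfl | ⟨k, rfl⟩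
  · exact h g hg g' hg' fun k => congrFun hgg' k
  · exact congrFun hgg' k

lemma card_filter_exists_eq_le (m : ℕ) (w : V) :
    #{g : Fin (m + 1) → V | ∃ i, g i = w} ≤ (m + 1) * Fintype.card V ^ m := by
  have hsub : ({g : Fin (m + 1) → V | ∃ i, g i = w} : Finset _) ⊆
      univ.biUnion fun i => {g : Fin (m + 1) → V | g i = w} := fun g hg => by simpa using hg
  refine (card_le_card hsub).trans ((card_biUnion_le_card_mul _ _ (Fintype.card V ^ m)
    fun i _ => ?_).trans (by simp))
  refine card_le_pow_of_eq_of_eq_succAbove i _ fun g hg g' hg' _ => ?_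
  rw [(mem_filter.1 hg).2, (mem_filter.1 hg').2]

lemma card_filter_not_injective_le (m : ℕ) :
    #{g : Fin (m + 1) → V | ¬ Function.Injective g} ≤ (m + 1) ^ 2 * Fintype.card V ^ m := by
  have hsub : ({g : Fin (m + 1) → V | ¬ Function.Injective g} : Finset _) ⊆
      univ.offDiag.biUnion fun p => {g : Fin (m + 1) → V | g p.1 = g p.2} := fun g hg => by
    simpa [Function.Injective, and_comm] using hg
  refine (card_le_card hsub).trans ((card_biUnion_le_card_mul _ _ (Fintype.card V ^ m)
    fun p hp => ?_).trans (Nat.mul_le_mul_right _ ?_))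
  · obtain ⟨k, hk⟩ := Fin.exists_succAbove_eq (mem_offDiag.1 hp).2.2.symm
    refine card_le_pow_of_eq_of_eq_succAbove p.1 _ fun g hg g' hg' hgg' => ?_
    rw [(mem_filter.1 hg).2, (mem_filter.1 hg').2, ← hk, hgg']
  · simp [offDiag_card, sq]

lemma adjMatrix_pow_sub_le_card_linkSet (G : SimpleGraph V) (m : ℕ) (u v : V) :
    (G.adjMatrix ℝ ^ (m + 2)) u v - ((m + 1) ^ 2 + 2 * (m + 1)) * (Fintype.card V : ℝ) ^ m ≤
      #(linkSet G u v (m + 1)) := by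
  have hsub : univ.filter (fun g : Fin (m + 1) → V => (u :: (List.ofFn g ++ [v])).IsChain G.Adj) ⊆
      linkSet G u v (m + 1) ∪ (univ.filter (fun g => ¬ Function.Injective g) ∪
        (univ.filter (fun g => ∃ i, g i = u) ∪ univ.filter (fun g => ∃ i, g i = v))) := by
    intro g hg
    simp only [mem_union, mem_linkSet, mem_filter_univ] at hg ⊢
    grind
  have hcard := (card_le_card hsub).trans <| (card_union_le _ _).trans <| Nat.add_le_add_left
    ((card_union_le _ _).trans <| Nat.add_le_add (card_filter_not_injective_le m) <|
      (card_union_le _ _).trans <|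
        Nat.add_le_add (card_filter_exists_eq_le m u) (card_filter_exists_eq_le m v)) _
  rw [adjMatrix_pow_apply_eq_card_isChain, sub_le_iff_le_add]
  refine (Nat.cast_le.2 hcard).trans (le_of_eq ?_)
  push_cast
  ring

end Links

section Hitting

variable {X I : Type*} [Fintype X] [Nonempty X] {J : Finset I} {T : I → Finset X} {c : ℝ}

lemma exists_mul_card_le_card_filter_mem (hT : ∀ j ∈ J, c * Fintype.card X ≤ #(T j)) :
    ∃ x, c * #J ≤ #{j ∈ J | x ∈ T j} := by
  have hsum : ∑ x : X, (#{j ∈ J | x ∈ T j} : ℝ) = ∑ j ∈ J, (#(T j) : ℝ) := by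
    exact_mod_cast (sum_card_bipartiteAbove_eq_sum_card_bipartiteBelow
      (s := univ) (t := J) (fun x j => x ∈ T j)).trans (by simp [bipartiteBelow])
  obtain ⟨x, -, hx⟩ := exists_le_of_sum_le (s := (univ : Finset X)) univ_nonempty
    (f := fun _ => c * #J) (g := fun x => (#{j ∈ J | x ∈ T j} : ℝ)) (by
      rw [hsum, sum_const, nsmul_eq_mul, card_univ, ← mul_assoc, mul_comm (Fintype.card X : ℝ),
        mul_comm, ← nsmul_eq_mul]
      exact card_nsmul_le_sum _ _ _ hT)
  exact ⟨x, hx⟩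

/-- Greedy choice: each new point hits a proportion `c` of the sets not yet hit. -/
lemma exists_card_le_card_filter_disjoint_le (hc : c ≤ 1)
    (hT : ∀ j ∈ J, c * Fintype.card X ≤ #(T j)) (t : ℕ) :
    ∃ H : Finset X, #H ≤ t ∧ (#{j ∈ J | Disjoint (T j) H} : ℝ) ≤ (1 - c) ^ t * #J := by
  induction t with
  | zero => exact ⟨∅, by simp, by simp⟩
  | succ t ih =>
    obtain ⟨H, hH, hmissed⟩ := ih
    set J' := {j ∈ J | Disjoint (T j) H} with hJ'
    obtain ⟨x, hx⟩ := exists_mul_card_le_card_filter_mem (J := J') (T := T) (c := c)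
      fun j hj => hT j (mem_filter.1 hj).1
    refine ⟨insert x H, (card_insert_le _ _).trans (by omega), ?_⟩
    have hinsert : {j ∈ J | Disjoint (T j) (insert x H)} = {j ∈ J' | x ∉ T j} := by
      ext j
      simp only [hJ', mem_filter, disjoint_insert_right]
      tauto
    have hsplit : (#{j ∈ J' | x ∈ T j} : ℝ) + #{j ∈ J' | x ∉ T j} = #J' :=
      mod_cast card_filter_add_card_filter_not (s := J') (fun j => x ∈ T j)
    calc (#{j ∈ J | Disjoint (T j) (insert x H)} : ℝ)
        = #J' - #{j ∈ J' | x ∈ T j} := by rw [hinsert]; linarith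
      _ ≤ (1 - c) * #J' := by linarith
      _ ≤ (1 - c) * ((1 - c) ^ t * #J) := mul_le_mul_of_nonneg_left hmissed (by linarith)
      _ = (1 - c) ^ (t + 1) * #J := by ring

lemma exists_card_le_forall_not_disjoint (hc : c ≤ 1)
    (hT : ∀ j ∈ J, c * Fintype.card X ≤ #(T j)) {t : ℕ} (ht : (1 - c) ^ t * #J < 1) :
    ∃ H : Finset X, #H ≤ t ∧ ∀ j ∈ J, ¬ Disjoint (T j) H := by
  obtain ⟨H, hH, hmissed⟩ := exists_card_le_card_filter_disjoint_le hc hT t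
  have hzero : #{j ∈ J | Disjoint (T j) H} = 0 := by
    have := hmissed.trans_lt ht
    norm_cast at this
    omega
  exact ⟨H, hH, filter_eq_empty_iff.1 (card_eq_zero.1 hzero)⟩

end Hitting

section LinkedSets

variable {V : Type*} [Fintype V] {G : SimpleGraph V} {U R : Finset V} {m : ℕ}

/-- Any two vertices of `U` are joined by a path whose `m` interior vertices all lie in `R`. -/
def IsLinkedThrough (G : SimpleGraph V) (U R : Finset V) (m : ℕ) : Prop :=
  ∀ u ∈ U, ∀ v ∈ U, ∃ g ∈ linkSet G u v m, ∀ i, g i ∈ R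

lemma exists_isLinkedThrough [Nonempty V] {c : ℝ} (hc : c ≤ 1)
    (h : ∀ u ∈ U, ∀ v ∈ U, c * (Fintype.card V : ℝ) ^ m ≤ #(linkSet G u v m)) {t : ℕ}
    (ht : (1 - c) ^ t * (Fintype.card V : ℝ) ^ 2 < 1) :
    ∃ R, #R ≤ t * m ∧ IsLinkedThrough G U R m := by
  have hpairs : (#(U ×ˢ U) : ℝ) ≤ (Fintype.card V : ℝ) ^ 2 := by
    rw [card_product, ← sq]
    exact_mod_cast Nat.pow_le_pow_left (card_le_univ U) 2
  obtain ⟨H, hH, hhit⟩ := exists_card_le_forall_not_disjoint (J := U ×ˢ U)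
    (T := fun p => linkSet G p.1 p.2 m) hc
    (fun p hp => by simpa using h p.1 (mem_product.1 hp).1 p.2 (mem_product.1 hp).2)
    ((mul_le_mul_of_nonneg_left hpairs (pow_nonneg (by linarith) t)).trans_lt ht)
  refine ⟨H.biUnion fun g => univ.image g, ?_, fun u hu v hv => ?_⟩
  · refine (card_biUnion_le_card_mul _ _ m fun g _ => ?_).trans (Nat.mul_le_mul_right _ hH)
    exact card_image_le.trans (by simp)
  · obtain ⟨g, hg, hgH⟩ := not_disjoint_iff.1 (hhit (u, v) (mem_product.2 ⟨hu, hv⟩))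
    exact ⟨g, hg, fun i => mem_biUnion.2 ⟨g, hgH, mem_image_of_mem g (mem_univ i)⟩⟩

lemma hasCycleOfLength_of_mem_linkSet_self {u : V} (hm : 2 ≤ m) {g : Fin m → V}
    (hg : g ∈ linkSet G u u m) : HasCycleOfLength G (m + 1) := by
  obtain ⟨hchain, hinj, hne⟩ := mem_linkSet.1 hg
  rw [← List.cons_append, List.isChain_append] at hchain
  have hnodup : (u :: List.ofFn g).Nodup := by
    rw [List.nodup_cons, List.nodup_ofFn, List.mem_ofFn]
    exact ⟨fun ⟨i, hi⟩ => (hne i).1 hi, hinj⟩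
  have hclose := hchain.2.2 _ (List.getLast?_eq_getLast_of_ne_nil (List.cons_ne_nil _ _)) u rfl
  simpa using hasCycleOfLength_of_isChain _ hchain.1 hnodup (by simpa using hm) (by simp) hclose

lemma IsLinkedThrough.hasCycleOfLength_of_isPathIn (h : IsLinkedThrough G U R m) (hm : 1 ≤ m)
    {l : List V} (hl : IsPathIn G (U \ R) l) (hlen : 2 ≤ l.length) :
    HasCycleOfLength G (l.length + m) := by
  have hne : l ≠ [] := by rintro rfl; simp at hlen
  have hlR : ∀ x ∈ l, x ∈ U ∧ x ∉ R := fun x hx => mem_sdiff.1 (hl.subset x hx)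
  obtain ⟨g, hg, hgR⟩ := h _ (hlR _ (List.getLast_mem hne)).1 _ (hlR _ (List.head_mem hne)).1
  obtain ⟨hchain, hinj, -⟩ := mem_linkSet.1 hg
  rw [List.isChain_cons, List.isChain_append] at hchain
  obtain ⟨hstart, hinner, -, hend⟩ := hchain
  have hgne : List.ofFn g ≠ [] := List.ne_nil_of_length_pos (by rwa [List.length_ofFn])
  have hjoin : (l ++ List.ofFn g).IsChain G.Adj := by
    refine List.isChain_append.2 ⟨hl.isChain, hinner, fun x hx y hy => ?_⟩
    obtain rfl : l.getLast hne = x := by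
      simpa [List.getLast?_eq_getLast_of_ne_nil hne] using hx
    exact hstart y (by rw [List.head?_append, hy]; rfl)
  have hnodup : (l ++ List.ofFn g).Nodup := by
    refine hl.nodup.append (List.nodup_ofFn.2 hinj) fun x hx hxg => ?_
    obtain ⟨i, rfl⟩ := List.mem_ofFn.1 hxg
    exact (hlR _ hx).2 (hgR i)
  have hclose := hend _ (List.getLast?_eq_getLast_of_ne_nil hgne) _ rfl
  simpa using hasCycleOfLength_of_isChain (l ++ List.ofFn g) hjoin hnodup
    (by simp only [List.length_append, List.length_ofFn]; omega) (by simp [hne])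
    (by rwa [List.getLast_append_of_ne_nil _ hgne, List.head_append_of_ne_nil hne])

lemma card_interedges_le_sdiff_add (G : SimpleGraph V) (U R : Finset V) :
    #(G.interedges U U) ≤
      #(G.interedges (U \ R) (U \ R)) + 2 * #R * Fintype.card V := by
  have hsub : G.interedges U U ⊆ G.interedges (U \ R) (U \ R) ∪ (R ×ˢ univ ∪ univ ×ˢ R) := by
    rintro ⟨a, b⟩ he
    simp only [G.mk_mem_interedges_iff, mem_union, mem_sdiff, mem_product, mem_univ] at he ⊢
    tauto
  have hcard : #(R ×ˢ univ ∪ univ ×ˢ R) ≤ 2 * #R * Fintype.card V :=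
    (card_union_le _ _).trans (by simp only [card_product, card_univ]; exact le_of_eq (by ring))
  exact (card_le_card hsub).trans ((card_union_le _ _).trans (Nat.add_le_add_left hcard _))

lemma IsLinkedThrough.hasCycleOfLength {ℓ : ℕ} (h : IsLinkedThrough G U R m) (hm : 1 ≤ m)
    (hℓ : m + 2 ≤ ℓ)
    (hedges : ℓ * Fintype.card V + 2 * #R * Fintype.card V < #(G.interedges U U)) :
    HasCycleOfLength G ℓ := by
  have hdense : ℓ * #(U \ R) < #(G.interedges (U \ R) (U \ R)) := by
    have := card_interedges_le_sdiff_add G U R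
    have : ℓ * #(U \ R) ≤ ℓ * Fintype.card V := Nat.mul_le_mul_left _ (card_le_univ _)
    omega
  obtain ⟨p, hp, hlen⟩ := exists_isPathIn_of_mul_card_lt hdense
  have hshort : (p.take (ℓ - m)).length = ℓ - m := by rw [List.length_take]; omega
  rw [← List.take_append_drop (ℓ - m) p] at hp
  have := h.hasCycleOfLength_of_isPathIn hm hp.of_append.1 (by omega)
  rwa [hshort, Nat.sub_add_cancel (by omega)] at this

end LinkedSets

section SpectralGap

open Matrix

variable {V : Type*} [Fintype V] {G : SimpleGraph V} {δ κ : ℝ} {i₀ : V} {m : ℕ}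

lemma sum_dotProduct_mul_adjEigenvector (G : SimpleGraph V) (f : V → ℝ) (u : V) :
    ∑ i, (adjEigenvector G i ⬝ᵥ f) * adjEigenvector G i u = f u := by
  simp only [dotProduct, sum_mul]
  rw [sum_comm]
  have hid (v : V) : ∑ i, adjEigenvector G i v * adjEigenvector G i u = if v = u then 1 else 0 := by
    simpa [one_apply] using (adjMatrix_pow_apply_eq_sum G 0 v u).symm
  simp only [mul_right_comm _ (f _), ← sum_mul, hid]
  simp

lemma adjEigenvector_dotProduct_eq_zero_of_le {f : V → ℝ}
    (hf : specRad G * (f ⬝ᵥ f) ≤ f ⬝ᵥ (G.adjMatrix ℝ *ᵥ f)) {i : V}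
    (hi : adjEigenvalue G i < specRad G) : adjEigenvector G i ⬝ᵥ f = 0 := by
  have hnonneg : ∀ j ∈ univ, 0 ≤ (specRad G - adjEigenvalue G j) * (adjEigenvector G j ⬝ᵥ f) ^ 2 :=
    fun j _ => mul_nonneg (sub_nonneg.2 (adjEigenvalue_le_specRad G j)) (sq_nonneg _)
  have hsum : ∑ j, (specRad G - adjEigenvalue G j) * (adjEigenvector G j ⬝ᵥ f) ^ 2 = 0 := by
    refine le_antisymm ?_ (sum_nonneg hnonneg)
    rw [dotProduct_adjMatrix_mulVec, dotProduct_self_eq_sum_adjEigenvector G, mul_sum] at hf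
    simpa only [sub_mul, sum_sub_distrib, sub_nonpos] using hf
  have := (sum_eq_zero_iff_of_nonneg hnonneg).1 hsum i (mem_univ i)
  simpa [(sub_pos.2 hi).ne'] using this

/-- `i₀` indexes a top eigenvalue of the adjacency matrix, and all the other eigenvalues are at most
`(1 - δ) ρ(G)` in absolute value. -/
structure HasSpectralGap (G : SimpleGraph V) (δ : ℝ) (i₀ : V) : Prop where
  adjEigenvalue_eq : adjEigenvalue G i₀ = specRad G
  abs_adjEigenvalue_le : ∀ i ≠ i₀, |adjEigenvalue G i| ≤ (1 - δ) * specRad G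

/-- The vertices of substantial weight in the unit eigenvector indexed by `i₀`; the average of
`#V * (adjEigenvector G i₀ u) ^ 2` over all vertices `u` is `1`. -/
noncomputable def heavySet (G : SimpleGraph V) (i₀ : V) (κ : ℝ) : Finset V :=
  {u | κ ≤ Fintype.card V * adjEigenvector G i₀ u ^ 2}

lemma sum_adjEigenvector_sq (G : SimpleGraph V) (i : V) : ∑ u, adjEigenvector G i u ^ 2 = 1 := by
  simpa [dotProduct, sq] using adjEigenvector_dotProduct G i i

lemma sum_adjEigenvector_sq_compl_heavySet_le (G : SimpleGraph V) (i₀ : V) (hκ : 0 ≤ κ) :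
    ∑ u ∈ (heavySet G i₀ κ)ᶜ, adjEigenvector G i₀ u ^ 2 ≤ κ := by
  have hn : (0 : ℝ) < Fintype.card V := Nat.cast_pos.2 (Fintype.card_pos_iff.2 ⟨i₀⟩)
  have hlight : ∀ u ∈ (heavySet G i₀ κ)ᶜ,
      adjEigenvector G i₀ u ^ 2 ≤ κ / Fintype.card V := by
    intro u hu
    rw [le_div_iff₀' hn]
    simp only [heavySet, mem_compl, mem_filter, mem_univ, true_and, not_le] at hu
    exact hu.le
  calc ∑ u ∈ (heavySet G i₀ κ)ᶜ, adjEigenvector G i₀ u ^ 2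
      ≤ #(heavySet G i₀ κ)ᶜ * (κ / Fintype.card V) := by
        simpa using sum_le_card_nsmul _ _ _ hlight
    _ ≤ Fintype.card V * (κ / Fintype.card V) := by
        gcongr
        exact card_le_univ _
    _ = κ := mul_div_cancel₀ _ hn.ne'

namespace HasSpectralGap

lemma adjEigenvector_mul_nonneg (h : HasSpectralGap G δ i₀) (hδ : 0 < δ) (hρ : 0 < specRad G)
    (u v : V) : 0 ≤ adjEigenvector G i₀ u * adjEigenvector G i₀ v := by
  set f : V → ℝ := |adjEigenvector G i₀| with hf
  have hunit : f ⬝ᵥ f = 1 := by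
    simpa [hf, dotProduct, sq] using sum_adjEigenvector_sq G i₀
  have htop : specRad G * (f ⬝ᵥ f) ≤ f ⬝ᵥ (G.adjMatrix ℝ *ᵥ f) := by
    have := abs_dotProduct_adjMatrix_mulVec_le G (adjEigenvector G i₀)
    rw [dotProduct_adjMatrix_mulVec_adjEigenvector, h.adjEigenvalue_eq] at this
    rw [hunit, mul_one]
    exact (le_abs_self _).trans this
  have hcoeff (i : V) (hi : i ≠ i₀) : adjEigenvector G i ⬝ᵥ f = 0 := by
    refine adjEigenvector_dotProduct_eq_zero_of_le htop ?_
    have := (le_abs_self _).trans (h.abs_adjEigenvalue_le i hi)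
    nlinarith
  have hexpand (w : V) : f w = (adjEigenvector G i₀ ⬝ᵥ f) * adjEigenvector G i₀ w := by
    rw [← sum_dotProduct_mul_adjEigenvector G f w]
    exact sum_eq_single i₀ (fun i _ hi => by rw [hcoeff i hi, zero_mul]) (by simp)
  have hsq : (adjEigenvector G i₀ ⬝ᵥ f) ^ 2 = 1 := by
    rw [← hunit, dotProduct_self_eq_sum_adjEigenvector G f, eq_comm]
    exact sum_eq_single i₀ (fun i _ hi => by rw [hcoeff i hi, sq, zero_mul]) (by simp)
  calc (0 : ℝ) ≤ f u * f v := mul_nonneg (abs_nonneg _) (abs_nonneg _)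
    _ = (adjEigenvector G i₀ ⬝ᵥ f) ^ 2 * (adjEigenvector G i₀ u * adjEigenvector G i₀ v) := by
      rw [hexpand u, hexpand v]; ring
    _ = adjEigenvector G i₀ u * adjEigenvector G i₀ v := by rw [hsq, one_mul]

lemma abs_adjEigenvalue_pow_add_two_le (h : HasSpectralGap G δ i₀) (k : ℕ) {i : V} (hi : i ≠ i₀) :
    |adjEigenvalue G i ^ (k + 2)| ≤ ((1 - δ) * specRad G) ^ k * adjEigenvalue G i ^ 2 := by
  rw [pow_add, abs_mul, abs_pow, abs_of_nonneg (sq_nonneg (adjEigenvalue G i))]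
  gcongr
  exact h.abs_adjEigenvalue_le i hi

lemma le_adjMatrix_pow_apply (h : HasSpectralGap G δ i₀) (hδ : δ ≤ 1) (k : ℕ) (u v : V) :
    specRad G ^ (k + 2) * (adjEigenvector G i₀ u * adjEigenvector G i₀ v) -
      ((1 - δ) * specRad G) ^ k * Fintype.card V ≤ (G.adjMatrix ℝ ^ (k + 2)) u v := by
  have hK : 0 ≤ ((1 - δ) * specRad G) ^ k :=
    pow_nonneg (mul_nonneg (sub_nonneg.2 hδ) (specRad_nonneg G)) k
  set w : V → V → ℝ := fun u i => adjEigenvalue G i ^ 2 * adjEigenvector G i u ^ 2 with hw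
  have hterm : ∀ i ∈ univ.erase i₀, -(((1 - δ) * specRad G) ^ k * ((w u i + w v i) / 2)) ≤
      adjEigenvalue G i ^ (k + 2) * (adjEigenvector G i u * adjEigenvector G i v) := by
    intro i hi
    have hamgm : |adjEigenvector G i u * adjEigenvector G i v| ≤
        (adjEigenvector G i u ^ 2 + adjEigenvector G i v ^ 2) / 2 := by
      rw [abs_mul, ← sq_abs (adjEigenvector G i u), ← sq_abs (adjEigenvector G i v)]
      linarith [two_mul_le_add_sq |adjEigenvector G i u| |adjEigenvector G i v|]
    refine neg_le_of_abs_le ?_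
    rw [abs_mul]
    refine (mul_le_mul (h.abs_adjEigenvalue_pow_add_two_le k (ne_of_mem_erase hi)) hamgm
      (abs_nonneg _) (by positivity)).trans_eq ?_
    simp only [hw]
    ring
  have hdegree (x : V) : ∑ i, w x i ≤ Fintype.card V := by
    rw [← degree_eq_sum_adjEigenvalue_sq]
    exact_mod_cast (G.degree_lt_card_verts x).le
  have hrest : ∑ i ∈ univ.erase i₀, (w u i + w v i) / 2 ≤ Fintype.card V := by
    have hnonneg : ∀ i ∈ univ, i ∉ univ.erase i₀ → 0 ≤ (w u i + w v i) / 2 :=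
      fun i _ _ => by positivity
    refine (sum_le_sum_of_subset_of_nonneg (erase_subset _ _) hnonneg).trans ?_
    rw [← sum_div, sum_add_distrib]
    linarith [hdegree u, hdegree v]
  have := sum_le_sum hterm
  rw [sum_neg_distrib, ← mul_sum] at this
  rw [adjMatrix_pow_apply_eq_sum, ← add_sum_erase _ _ (mem_univ i₀), h.adjEigenvalue_eq]
  linarith [mul_le_mul_of_nonneg_left hrest hK]

lemma le_trace_adjMatrix_pow (h : HasSpectralGap G δ i₀) (hδ0 : 0 ≤ δ) (hδ1 : δ ≤ 1)
    (hn : Fintype.card V ≤ (2 + δ / 2) * specRad G) (hm : m ≠ 0) :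
    δ / 2 * specRad G ^ (m + 2) ≤ trace (G.adjMatrix ℝ ^ (m + 2)) := by
  have hρ := specRad_nonneg G
  have hsq : ∑ i ∈ univ.erase i₀, adjEigenvalue G i ^ 2 ≤ (1 + δ / 2) * specRad G ^ 2 := by
    have hedges := card_interedges_self_le_specRad_mul G univ
    rw [card_interedges_univ_eq_sum_adjEigenvalue_sq, card_univ,
      ← add_sum_erase _ _ (mem_univ i₀), h.adjEigenvalue_eq] at hedges
    linarith [mul_le_mul_of_nonneg_left hn hρ]
  have hpow : ((1 - δ) * specRad G) ^ m ≤ (1 - δ) * specRad G ^ m := by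
    rw [mul_pow]
    gcongr
    exact pow_le_of_le_one (by linarith) (by linarith) hm
  have hterm : ∀ i ∈ univ.erase i₀, -(((1 - δ) * specRad G) ^ m * adjEigenvalue G i ^ 2) ≤
      adjEigenvalue G i ^ (m + 2) := fun i hi =>
    neg_le_of_abs_le (h.abs_adjEigenvalue_pow_add_two_le m (ne_of_mem_erase hi))
  have hrest := sum_le_sum hterm
  rw [sum_neg_distrib, ← mul_sum] at hrest
  have hbound : ((1 - δ) * specRad G) ^ m * ∑ i ∈ univ.erase i₀, adjEigenvalue G i ^ 2 ≤
      (1 - δ / 2) * specRad G ^ (m + 2) := by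
    calc _ ≤ ((1 - δ) * specRad G ^ m) * ((1 + δ / 2) * specRad G ^ 2) :=
          mul_le_mul hpow hsq (sum_nonneg fun i _ => sq_nonneg _)
            (mul_nonneg (by linarith) (by positivity))
      _ = (1 - δ / 2) * specRad G ^ (m + 2) - δ ^ 2 / 2 * specRad G ^ (m + 2) := by ring
      _ ≤ _ := sub_le_self _ (by positivity)
  rw [trace_adjMatrix_pow, ← add_sum_erase _ _ (mem_univ i₀), h.adjEigenvalue_eq]
  linarith

lemma hasCycleOfLength_add_two (h : HasSpectralGap G δ i₀) (hδ0 : 0 < δ) (hδ1 : δ ≤ 1)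
    (hn : Fintype.card V ≤ (2 + δ / 2) * specRad G) (hm : m ≠ 0)
    (hbig : ((m + 1) ^ 2 + 2 * (m + 1)) * 3 ^ (m + 2) * 2 < δ * Fintype.card V) :
    HasCycleOfLength G (m + 2) := by
  by_contra hcycle
  set n : ℝ := (Fintype.card V : ℝ)
  have hn0 : 0 < n := Nat.cast_pos.2 (Fintype.card_pos_iff.2 ⟨i₀⟩)
  have hdiag (v : V) : (G.adjMatrix ℝ ^ (m + 2)) v v ≤ ((m + 1) ^ 2 + 2 * (m + 1)) * n ^ m := by
    have hempty : linkSet G v v (m + 1) = ∅ := eq_empty_of_forall_notMem fun g hg =>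
      hcycle (hasCycleOfLength_of_mem_linkSet_self (by omega) hg)
    have := adjMatrix_pow_sub_le_card_linkSet G m v v
    rw [hempty, card_empty, Nat.cast_zero] at this
    linarith
  have htrace : trace (G.adjMatrix ℝ ^ (m + 2)) ≤ n * (((m + 1) ^ 2 + 2 * (m + 1)) * n ^ m) := by
    simpa [trace] using sum_le_card_nsmul univ _ _ fun v _ => hdiag v
  have hρ : n ^ (m + 2) ≤ specRad G ^ (m + 2) * 3 ^ (m + 2) := by
    rw [← mul_pow]
    exact pow_le_pow_left₀ hn0.le (by nlinarith) _
  have hlower := (h.le_trace_adjMatrix_pow hδ0.le hδ1 hn hm).trans htrace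
  have : δ * n ^ (m + 2) < δ * n ^ (m + 2) := by
    calc δ * n ^ (m + 2) ≤ δ * (specRad G ^ (m + 2) * 3 ^ (m + 2)) := by gcongr
      _ = δ / 2 * specRad G ^ (m + 2) * (2 * 3 ^ (m + 2)) := by ring
      _ ≤ n * (((m + 1) ^ 2 + 2 * (m + 1)) * n ^ m) * (2 * 3 ^ (m + 2)) := by gcongr
      _ = ((m + 1) ^ 2 + 2 * (m + 1)) * 3 ^ (m + 2) * 2 * n ^ (m + 1) := by ring
      _ < δ * n * n ^ (m + 1) := by gcongr
      _ = δ * n ^ (m + 2) := by ring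
  exact this.false

end HasSpectralGap

end SpectralGap

lemma sq_sum_sum_adjMatrix_mul_le {V : Type*} (G : SimpleGraph V) (A B : Finset V)
    (x : V → ℝ) :
    (∑ u ∈ A, ∑ v ∈ B, G.adjMatrix ℝ u v * (x u * x v)) ^ 2 ≤
      #(G.interedges A B) * ((∑ u ∈ A, x u ^ 2) * ∑ v ∈ B, x v ^ 2) := by
  have := sum_mul_sq_le_sq_mul_sq (A ×ˢ B) (fun p => G.adjMatrix ℝ p.1 p.2)
    (fun p => x p.1 * x p.2)
  simp only [sum_product] at this
  refine this.trans_eq ?_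
  rw [← sum_sum_adjMatrix_eq_card_interedges]
  congr 1
  · simp [adjMatrix_apply]
  · simp only [mul_pow, sum_mul_sum]

section GapCycles

open Matrix

variable {V : Type*} [Fintype V] {G : SimpleGraph V} {δ κ : ℝ} {i₀ : V} {m : ℕ}

namespace HasSpectralGap

lemma sum_adjMatrix_mul_adjEigenvector (h : HasSpectralGap G δ i₀) (u : V) :
    ∑ v, G.adjMatrix ℝ u v * (adjEigenvector G i₀ u * adjEigenvector G i₀ v) =
      specRad G * adjEigenvector G i₀ u ^ 2 := by
  have := congrFun (adjMatrix_mulVec_adjEigenvector G i₀) u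
  rw [h.adjEigenvalue_eq, Pi.smul_apply, smul_eq_mul] at this
  simp only [mul_left_comm _ (adjEigenvector G i₀ u), ← mul_sum]
  rw [sq, mul_left_comm, ← this]
  rfl

lemma specRad_mul_le_sum_heavySet (h : HasSpectralGap G δ i₀) (hδ : 0 < δ) (hρ : 0 < specRad G)
    (hκ : 0 ≤ κ) :
    specRad G * (1 - 2 * κ) ≤ ∑ u ∈ heavySet G i₀ κ, ∑ v ∈ heavySet G i₀ κ,
      G.adjMatrix ℝ u v * (adjEigenvector G i₀ u * adjEigenvector G i₀ v) := by
  set x := adjEigenvector G i₀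
  set U := heavySet G i₀ κ
  set w : V → V → ℝ := fun u v => G.adjMatrix ℝ u v * (x u * x v) with hw
  have hnonneg (u v : V) : 0 ≤ w u v :=
    mul_nonneg (by rw [adjMatrix_apply]; positivity) (h.adjEigenvector_mul_nonneg hδ hρ u v)
  have hsymm (u v : V) : w u v = w v u := by simp only [hw, adjMatrix_apply, G.adj_comm, mul_comm]
  have hrow (u : V) : ∑ v, w u v = specRad G * x u ^ 2 := h.sum_adjMatrix_mul_adjEigenvector u
  have htotal : ∑ u, ∑ v, w u v = specRad G := by
    simp only [hrow, ← mul_sum, x, sum_adjEigenvector_sq, mul_one]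
  have hlight : ∑ u ∈ Uᶜ, ∑ v, w u v ≤ specRad G * κ := by
    simp only [hrow, ← mul_sum]
    exact mul_le_mul_of_nonneg_left (sum_adjEigenvector_sq_compl_heavySet_le G i₀ hκ) hρ.le
  have hcross : ∑ u ∈ U, ∑ v ∈ Uᶜ, w u v ≤ specRad G * κ := by
    rw [sum_comm]
    refine (sum_le_sum fun v _ => ?_).trans hlight
    simp only [hsymm _ v]
    exact sum_le_sum_of_subset_of_nonneg (subset_univ U) fun u _ _ => hnonneg v u
  rw [← sum_add_sum_compl U] at htotal
  have hsplit : ∑ u ∈ U, ∑ v, w u v = ∑ u ∈ U, ∑ v ∈ U, w u v + ∑ u ∈ U, ∑ v ∈ Uᶜ, w u v := by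
    rw [← sum_add_distrib]
    exact sum_congr rfl fun u _ => (sum_add_sum_compl U _).symm
  linarith

lemma le_card_interedges_heavySet (h : HasSpectralGap G δ i₀) (hδ : 0 < δ) (hρ : 0 < specRad G)
    (hκ0 : 0 ≤ κ) (hκ1 : κ ≤ 1 / 2) :
    (1 - 4 * κ) * specRad G ^ 2 ≤ #(G.interedges (heavySet G i₀ κ) (heavySet G i₀ κ)) := by
  set U := heavySet G i₀ κ
  have hmass : ∑ u ∈ U, adjEigenvector G i₀ u ^ 2 ≤ 1 := by
    rw [← sum_adjEigenvector_sq G i₀]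
    exact sum_le_sum_of_subset_of_nonneg (subset_univ U) fun u _ _ => sq_nonneg _
  calc (1 - 4 * κ) * specRad G ^ 2 ≤ (specRad G * (1 - 2 * κ)) ^ 2 := by
        nlinarith [sq_nonneg (specRad G * κ)]
    _ ≤ (∑ u ∈ U, ∑ v ∈ U, G.adjMatrix ℝ u v *
          (adjEigenvector G i₀ u * adjEigenvector G i₀ v)) ^ 2 :=
        pow_le_pow_left₀ (mul_nonneg hρ.le (by linarith))
          (h.specRad_mul_le_sum_heavySet hδ hρ hκ0) 2
    _ ≤ #(G.interedges U U) * (∑ u ∈ U, adjEigenvector G i₀ u ^ 2) ^ 2 :=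
        (sq_sum_sum_adjMatrix_mul_le G U U _).trans_eq (by rw [sq (∑ u ∈ U, _)])
    _ ≤ #(G.interedges U U) := mul_le_of_le_one_right (Nat.cast_nonneg _)
        (pow_le_one₀ (sum_nonneg fun _ _ => sq_nonneg _) hmass)

lemma div_card_le_mul_of_mem_heavySet (h : HasSpectralGap G δ i₀) (hδ : 0 < δ)
    (hρ : 0 < specRad G) (hκ : 0 ≤ κ) {u v : V} (hu : u ∈ heavySet G i₀ κ)
    (hv : v ∈ heavySet G i₀ κ) :
    κ / Fintype.card V ≤ adjEigenvector G i₀ u * adjEigenvector G i₀ v := by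
  have hn : (0 : ℝ) < Fintype.card V := Nat.cast_pos.2 (Fintype.card_pos_iff.2 ⟨i₀⟩)
  simp only [heavySet, mem_filter, mem_univ, true_and] at hu hv
  refine le_of_sq_le_sq ?_ (h.adjEigenvector_mul_nonneg hδ hρ u v)
  rw [div_pow, div_le_iff₀ (by positivity)]
  nlinarith [mul_le_mul hu hv hκ (by positivity)]

lemma le_card_linkSet (h : HasSpectralGap G δ i₀) (hδ0 : 0 < δ) (hδ1 : δ ≤ 1)
    (hn : Fintype.card V ≤ 3 * specRad G) (hκ : 0 < κ) (hm : (1 - δ) ^ m ≤ κ / 18)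
    (hbig : (m + 1) ^ 2 + 2 * (m + 1) ≤ κ / (4 * 3 ^ (m + 2)) * Fintype.card V) {u v : V}
    (hu : u ∈ heavySet G i₀ κ) (hv : v ∈ heavySet G i₀ κ) :
    κ / (4 * 3 ^ (m + 2)) * (Fintype.card V : ℝ) ^ (m + 1) ≤ #(linkSet G u v (m + 1)) := by
  set n : ℝ := (Fintype.card V : ℝ)
  have hn0 : 0 < n := Nat.cast_pos.2 (Fintype.card_pos_iff.2 ⟨i₀⟩)
  have hρ : 0 < specRad G := by linarith
  have hmain : specRad G ^ (m + 2) * (κ / n) ≤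
      specRad G ^ (m + 2) * (adjEigenvector G i₀ u * adjEigenvector G i₀ v) := by
    gcongr
    exact h.div_card_le_mul_of_mem_heavySet hδ0 hρ hκ.le hu hv
  have herror : ((1 - δ) * specRad G) ^ m * n ≤ specRad G ^ (m + 2) * (κ / n) / 2 := by
    rw [← mul_div_assoc, div_div, le_div_iff₀ (by positivity)]
    calc ((1 - δ) * specRad G) ^ m * n * (n * 2)
        = (1 - δ) ^ m * specRad G ^ m * (2 * n ^ 2) := by rw [mul_pow]; ring
      _ ≤ κ / 18 * specRad G ^ m * (2 * (3 * specRad G) ^ 2) := by gcongr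
      _ = specRad G ^ (m + 2) * κ := by ring
  have hgrowth : κ / (4 * 3 ^ (m + 2)) * n ^ (m + 1) * 2 ≤ specRad G ^ (m + 2) * (κ / n) / 2 := by
    calc κ / (4 * 3 ^ (m + 2)) * n ^ (m + 1) * 2 = (n / 3) ^ (m + 2) * (κ / n) / 2 := by
          rw [div_pow]; field_simp; ring
      _ ≤ _ := by
          gcongr
          linarith
  have hdegenerate : ((m + 1) ^ 2 + 2 * (m + 1)) * n ^ m ≤
      κ / (4 * 3 ^ (m + 2)) * n ^ (m + 1) := by
    calc ((m + 1) ^ 2 + 2 * (m + 1)) * n ^ m ≤ (κ / (4 * 3 ^ (m + 2)) * n) * n ^ m := by gcongr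
      _ = _ := by ring
  linarith [adjMatrix_pow_sub_le_card_linkSet G m u v, h.le_adjMatrix_pow_apply hδ1 m u v]

end HasSpectralGap

lemma exists_natCast_le_mul_pow_mul_pow_lt_one {r a : ℝ} (hr0 : 0 ≤ r) (hr1 : r < 1) (ha : 0 < a)
    (k : ℕ) : ∃ N : ℕ, ∀ n : ℕ, N ≤ n → ∃ t : ℕ, (t : ℝ) ≤ a * n ∧ r ^ t * (n : ℝ) ^ k < 1 := by
  have hdecay : ∀ᶠ t : ℕ in Filter.atTop, (t : ℝ) ^ k * r ^ t < (a / 2) ^ k :=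
    (tendsto_pow_const_mul_const_pow_of_abs_lt_one k (by rwa [abs_of_nonneg hr0])).eventually
      (gt_mem_nhds (by positivity))
  have hfloor : Filter.Tendsto (fun n : ℕ => ⌊a * (n : ℝ)⌋₊) Filter.atTop Filter.atTop :=
    tendsto_nat_floor_atTop.comp (tendsto_natCast_atTop_atTop.const_mul_atTop ha)
  obtain ⟨N, hN⟩ := Filter.eventually_atTop.1
    (hfloor.eventually (hdecay.and (Filter.eventually_ge_atTop 1)))
  refine ⟨N, fun n hn => ⟨⌊a * (n : ℝ)⌋₊, Nat.floor_le (by positivity), ?_⟩⟩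
  obtain ⟨hsmall, hpos⟩ := hN n hn
  set t := ⌊a * (n : ℝ)⌋₊
  have ht : a / 2 * n ≤ t := by
    have : a * n < t + 1 := Nat.lt_floor_add_one _
    have : (1 : ℝ) ≤ t := by exact_mod_cast hpos
    linarith
  have : (a / 2) ^ k * (r ^ t * (n : ℝ) ^ k) < (a / 2) ^ k * 1 := by
    calc (a / 2) ^ k * (r ^ t * (n : ℝ) ^ k) = (a / 2 * n) ^ k * r ^ t := by ring
      _ ≤ (t : ℝ) ^ k * r ^ t := by gcongr
      _ < (a / 2) ^ k * 1 := by rwa [mul_one]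
  exact lt_of_mul_lt_mul_left this (by positivity)

lemma HasSpectralGap.hasCycleOfLength_of_lt (h : HasSpectralGap G δ i₀) {η c : ℝ} {t ℓ : ℕ}
    (hδ0 : 0 < δ) (hδ1 : δ ≤ 1) (hη : η ≤ 1) (hn : Fintype.card V ≤ 3 * specRad G)
    (hη0 : 0 < η) (hm : (1 - δ) ^ m ≤ η / 144) (hc : c = η / (32 * 3 ^ (m + 2)))
    (hbig : (m + 1) ^ 2 + 2 * (m + 1) ≤ c * Fintype.card V)
    (ht : (1 - c) ^ t * (Fintype.card V : ℝ) ^ 2 < 1)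
    (htn : t * (m + 1) ≤ η / 40 * Fintype.card V) (hmℓ : m + 2 < ℓ)
    (hℓ : ℓ * Fintype.card V ≤ (1 - η) * specRad G ^ 2) : HasCycleOfLength G ℓ := by
  set n : ℝ := (Fintype.card V : ℝ)
  have : Nonempty V := ⟨i₀⟩
  have hn0 : 0 < n := Nat.cast_pos.2 Fintype.card_pos
  have hρ : 0 < specRad G := by linarith
  have hcκ : c = η / 8 / (4 * 3 ^ (m + 2)) := by rw [hc, div_div]; ring
  have hc1 : c ≤ 1 := by
    rw [hc, div_le_one (by positivity)]
    linarith [one_le_pow₀ (n := m + 2) (show (1 : ℝ) ≤ 3 by norm_num)]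
  obtain ⟨R, hR, hlinked⟩ := exists_isLinkedThrough (U := heavySet G i₀ (η / 8)) hc1
    (fun u hu v hv => hcκ ▸ h.le_card_linkSet hδ0 hδ1 hn (by positivity) (by linarith)
      (hcκ ▸ hbig) hu hv) ht
  refine hlinked.hasCycleOfLength (by omega) (by omega) ?_
  have hheavy := h.le_card_interedges_heavySet hδ0 hρ (κ := η / 8) (by linarith) (by linarith)
  have hRn : (#R : ℝ) ≤ η / 40 * n := le_trans (by exact_mod_cast hR) htn
  have hwaste : 2 * #R * n ≤ 9 / 20 * η * specRad G ^ 2 := by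
    calc 2 * #R * n ≤ 2 * (η / 40 * n) * n := by gcongr
      _ = η / 20 * n ^ 2 := by ring
      _ ≤ η / 20 * (3 * specRad G) ^ 2 := by gcongr
      _ = _ := by ring
  have hpos : 0 < η * specRad G ^ 2 := by positivity
  rw [← Nat.cast_lt (α := ℝ)]
  push_cast
  linarith

theorem exists_forall_hasSpectralGap_hasCycleOfLength {δ η : ℝ} (hδ0 : 0 < δ) (hδ1 : δ ≤ 1)
    (hη0 : 0 < η) (hη1 : η ≤ 1) :
    ∃ N : ℕ, ∀ (V : Type*) [Fintype V] (G : SimpleGraph V) (i₀ : V), N ≤ Fintype.card V →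
      HasSpectralGap G δ i₀ → Fintype.card V ≤ (2 + δ / 2) * specRad G →
      ∀ ℓ : ℕ, 3 ≤ ℓ → ℓ * Fintype.card V ≤ (1 - η) * specRad G ^ 2 → HasCycleOfLength G ℓ := by
  obtain ⟨m, hm⟩ := exists_pow_lt_of_lt_one (show 0 < η / 144 by positivity)
    (show 1 - δ < 1 by linarith)
  set c : ℝ := η / (32 * 3 ^ (m + 2)) with hc
  have hc0 : 0 < c := by positivity
  have hc1 : c ≤ 1 := by
    rw [hc, div_le_one (by positivity)]
    linarith [one_le_pow₀ (n := m + 2) (show (1 : ℝ) ≤ 3 by norm_num)]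
  obtain ⟨N₁, hN₁⟩ := exists_natCast_le_mul_pow_mul_pow_lt_one (r := 1 - c)
    (a := η / 40 / (m + 1)) (by linarith) (by linarith) (by positivity) 2
  obtain ⟨N₂, hN₂⟩ := exists_nat_gt (((m + 1) ^ 2 + 2 * (m + 1)) * 3 ^ (m + 2) * 2 / δ : ℝ)
  obtain ⟨N₃, hN₃⟩ := exists_nat_gt (((m + 1) ^ 2 + 2 * (m + 1)) / c : ℝ)
  refine ⟨N₁ + N₂ + N₃, fun V _ G i₀ hN h hn ℓ hℓ3 hℓ => ?_⟩
  have hN₂n : (N₂ : ℝ) ≤ Fintype.card V := by norm_cast; omega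
  have hN₃n : (N₃ : ℝ) ≤ Fintype.card V := by norm_cast; omega
  by_cases hmℓ : ℓ ≤ m + 2
  · obtain ⟨k, rfl⟩ : ∃ k, ℓ = k + 2 := ⟨ℓ - 2, by omega⟩
    have hkm : k ≤ m := by omega
    refine h.hasCycleOfLength_add_two hδ0 hδ1 hn (by omega) ?_
    rw [div_lt_iff₀' hδ0] at hN₂
    calc ((k + 1 : ℝ) ^ 2 + 2 * (k + 1)) * 3 ^ (k + 2) * 2
        ≤ ((m + 1) ^ 2 + 2 * (m + 1)) * 3 ^ (m + 2) * 2 := by gcongr; norm_num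
      _ < δ * N₂ := hN₂
      _ ≤ δ * Fintype.card V := by gcongr
  · obtain ⟨t, htn, ht⟩ := hN₁ (Fintype.card V) (by omega)
    rw [div_lt_iff₀' hc0] at hN₃
    refine h.hasCycleOfLength_of_lt hδ0 hδ1 hη1 ?_ hη0 hm.le hc ?_ ht ?_ (by omega) hℓ
    · nlinarith [specRad_nonneg G]
    · exact hN₃.le.trans (by gcongr)
    · rwa [div_mul_eq_mul_div, le_div_iff₀ (by positivity)] at htn

end GapCycles

section TwoLargeEigenvalues

open Matrix

variable {V : Type*} [Fintype V] {G : SimpleGraph V} {τ δ : ℝ} {w : V → ℝ}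

lemma HasSpectralGap.of_card_le {W : Finset V} (hτ : τ ≤ specRad G) (hδ : δ ≤ 1) {i₀ : V}
    (htop : adjEigenvalue G i₀ = specRad G) (hsupp : G.support ⊆ W)
    (hW : #W ≤ (1 + (1 - δ) ^ 2) * τ) : HasSpectralGap G δ i₀ := by
  refine ⟨htop, fun i hi => abs_le_of_sq_le_sq ?_
    (mul_nonneg (sub_nonneg.2 hδ) (specRad_nonneg G))⟩
  have hsub : G.interedges univ univ ⊆ G.interedges W W := by
    rintro ⟨u, v⟩ he
    rw [mk_mem_interedges_iff] at he ⊢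
    exact ⟨hsupp ⟨v, he.2.2⟩, hsupp ⟨u, he.2.2.symm⟩, he.2.2⟩
  have hedges : specRad G ^ 2 + adjEigenvalue G i ^ 2 ≤ specRad G * #W := by
    calc specRad G ^ 2 + adjEigenvalue G i ^ 2
        = ∑ j ∈ {i₀, i}, adjEigenvalue G j ^ 2 := by rw [sum_pair hi.symm, htop]
      _ ≤ ∑ j, adjEigenvalue G j ^ 2 :=
          sum_le_sum_of_subset_of_nonneg (subset_univ _) fun _ _ _ => sq_nonneg _
      _ ≤ #(G.interedges W W) := by
          rw [← card_interedges_univ_eq_sum_adjEigenvalue_sq]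
          exact_mod_cast card_le_card hsub
      _ ≤ specRad G * #W := card_interedges_self_le_specRad_mul G W
  have hcard : (#W : ℝ) ≤ (1 + (1 - δ) ^ 2) * specRad G := hW.trans (by gcongr)
  linarith [mul_le_mul_of_nonneg_left hcard (specRad_nonneg G)]

lemma exists_le_hasSpectralGap_of_card_support_le (hδ : δ ≤ 1) {f : V → ℝ} (hf : f ≠ 0)
    (hquad : τ * (f ⬝ᵥ f) ≤ f ⬝ᵥ (G.adjMatrix ℝ *ᵥ f))
    (hsupp : #{u | f u ≠ 0} ≤ (1 + (1 - δ) ^ 2) * τ) :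
    ∃ H ≤ G, ∃ i, τ ≤ specRad H ∧ HasSpectralGap H δ i := by
  obtain ⟨H, hHG, hH⟩ : ∃ H ≤ G, ∀ u v, H.Adj u v ↔ f u ≠ 0 ∧ f v ≠ 0 ∧ G.Adj u v :=
    ⟨(G.induce (Function.support f)).spanningCoe, spanningCoe_induce_le G _, fun u v => by
      simp only [map_adj, comap_adj, Function.Embedding.subtype_apply, Subtype.exists,
        Function.mem_support]
      aesop⟩
  have hquadH : f ⬝ᵥ (H.adjMatrix ℝ *ᵥ f) = f ⬝ᵥ (G.adjMatrix ℝ *ᵥ f) := by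
    simp only [dotProduct_mulVec_adjMatrix, hH]
    refine sum_congr rfl fun u _ => sum_congr rfl fun v _ => ?_
    by_cases hu : f u = 0 <;> by_cases hv : f v = 0 <;> simp [hu, hv]
  have hpos : 0 < f ⬝ᵥ f :=
    (sum_nonneg fun u _ => mul_self_nonneg (f u)).lt_of_ne' (dotProduct_self_eq_zero.not.2 hf)
  have hρ : τ ≤ specRad H := le_of_mul_le_mul_right
    (hquad.trans (hquadH.symm.trans_le (dotProduct_adjMatrix_mulVec_le H f))) hpos
  obtain ⟨x, -⟩ := Function.ne_iff.1 hf
  have : Nonempty V := ⟨x⟩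
  obtain ⟨i, hi⟩ := exists_adjEigenvalue_eq_specRad H
  exact ⟨H, hHG, i, hρ,
    .of_card_le hρ hδ hi (fun u ⟨v, huv⟩ => by simpa using ((hH u v).1 huv).1) hsupp⟩

lemma exists_sq_add_sq_eq_one_mul_add_mul_eq_zero (s t : ℝ) :
    ∃ α β : ℝ, α ^ 2 + β ^ 2 = 1 ∧ α * s + β * t = 0 := by
  by_cases h : s ^ 2 + t ^ 2 = 0
  · have hs : s = 0 := by nlinarith [sq_nonneg s, sq_nonneg t]
    have ht : t = 0 := by nlinarith [sq_nonneg s, sq_nonneg t]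
    exact ⟨1, 0, by norm_num, by rw [hs, ht]; ring⟩
  · have hr : √(s ^ 2 + t ^ 2) ≠ 0 := Real.sqrt_ne_zero'.2 (by positivity)
    refine ⟨t / √(s ^ 2 + t ^ 2), -s / √(s ^ 2 + t ^ 2), ?_, by ring⟩
    field_simp
    rw [Real.sq_sqrt (by positivity)]
    ring

lemma mul_adjEigenvector_sq_add_le_card (hτ : 0 ≤ τ) {i j : V} (hij : i ≠ j)
    (hi : τ ≤ adjEigenvalue G i) (hj : τ ≤ adjEigenvalue G j) (u : V) :
    τ ^ 2 * (adjEigenvector G i u ^ 2 + adjEigenvector G j u ^ 2) ≤ Fintype.card V := by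
  calc τ ^ 2 * (adjEigenvector G i u ^ 2 + adjEigenvector G j u ^ 2)
      ≤ adjEigenvalue G i ^ 2 * adjEigenvector G i u ^ 2 +
        adjEigenvalue G j ^ 2 * adjEigenvector G j u ^ 2 := by rw [mul_add]; gcongr
    _ = ∑ k ∈ {i, j}, adjEigenvalue G k ^ 2 * adjEigenvector G k u ^ 2 := by
        rw [sum_pair hij]
    _ ≤ ∑ k, adjEigenvalue G k ^ 2 * adjEigenvector G k u ^ 2 :=
        sum_le_sum_of_subset_of_nonneg (subset_univ _) fun _ _ _ => by positivity
    _ ≤ Fintype.card V := by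
        rw [← degree_eq_sum_adjEigenvalue_sq]
        exact_mod_cast (G.degree_lt_card_verts u).le

lemma exists_sum_eq_zero_le_dotProduct_adjMatrix_mulVec (hτ : 0 < τ) {i j : V} (hij : i ≠ j)
    (hi : τ ≤ adjEigenvalue G i) (hj : τ ≤ adjEigenvalue G j) :
    ∃ w : V → ℝ, ∑ u, w u = 0 ∧ w ⬝ᵥ w = 1 ∧ τ ≤ w ⬝ᵥ (G.adjMatrix ℝ *ᵥ w) ∧
      ∀ u, w u ^ 2 ≤ Fintype.card V / τ ^ 2 := by
  obtain ⟨α, β, hunit, hsum⟩ := exists_sq_add_sq_eq_one_mul_add_mul_eq_zero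
    (∑ u, adjEigenvector G i u) (∑ u, adjEigenvector G j u)
  refine ⟨α • adjEigenvector G i + β • adjEigenvector G j, ?_, ?_, ?_, fun u => ?_⟩
  · simpa [sum_add_distrib, ← mul_sum] using hsum
  · simpa [adjEigenvector_dotProduct, hij, hij.symm, ← sq] using hunit
  · have hquad : (α • adjEigenvector G i + β • adjEigenvector G j) ⬝ᵥ
        (G.adjMatrix ℝ *ᵥ (α • adjEigenvector G i + β • adjEigenvector G j)) =
        α ^ 2 * adjEigenvalue G i + β ^ 2 * adjEigenvalue G j := by
      simp [mulVec_add, mulVec_smul, adjMatrix_mulVec_adjEigenvector, adjEigenvector_dotProduct,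
        hij, hij.symm]
      ring
    rw [hquad]
    nlinarith [sq_nonneg α, sq_nonneg β]
  · rw [le_div_iff₀' (by positivity)]
    refine le_trans ?_ (mul_adjEigenvector_sq_add_le_card hτ.le hij hi hj u)
    gcongr
    simp only [Pi.add_apply, Pi.smul_apply, smul_eq_mul]
    set a := adjEigenvector G i u
    set b := adjEigenvector G j u
    calc (α * a + β * b) ^ 2 ≤ (α * a + β * b) ^ 2 + (α * b - β * a) ^ 2 :=
          le_add_of_nonneg_right (sq_nonneg _)
      _ = (α ^ 2 + β ^ 2) * (a ^ 2 + b ^ 2) := by ring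
      _ = a ^ 2 + b ^ 2 := by rw [hunit, one_mul]

lemma dotProduct_self_eq_posPart_add_negPart (w : V → ℝ) : w ⬝ᵥ w = w⁺ ⬝ᵥ w⁺ + w⁻ ⬝ᵥ w⁻ := by
  simp only [dotProduct, ← sum_add_distrib, Pi.posPart_apply, Pi.negPart_apply]
  refine sum_congr rfl fun u _ => ?_
  rcases le_total 0 (w u) with h | h <;> simp [h]

lemma dotProduct_adjMatrix_mulVec_le_posPart_add_negPart (G : SimpleGraph V) (w : V → ℝ) :
    w ⬝ᵥ (G.adjMatrix ℝ *ᵥ w) ≤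
      w⁺ ⬝ᵥ (G.adjMatrix ℝ *ᵥ w⁺) + w⁻ ⬝ᵥ (G.adjMatrix ℝ *ᵥ w⁻) := by
  simp only [dotProduct_mulVec_adjMatrix, ← sum_add_distrib]
  refine sum_le_sum fun u _ => sum_le_sum fun v _ => ?_
  split_ifs
  · calc w u * w v = ((w u)⁺ - (w u)⁻) * ((w v)⁺ - (w v)⁻) := by simp only [posPart_sub_negPart]
      _ ≤ (w u)⁺ * (w v)⁺ + (w u)⁻ * (w v)⁻ := by
          linarith [mul_nonneg (posPart_nonneg (w u)) (negPart_nonneg (w v)),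
            mul_nonneg (negPart_nonneg (w u)) (posPart_nonneg (w v))]
  · simp

lemma one_le_two_mul_mul_card_pos {D : ℝ} (hsum : ∑ u, w u = 0) (hunit : w ⬝ᵥ w = 1)
    (hD : ∀ u, w u ^ 2 ≤ D) : 1 ≤ 2 * D * #{u | 0 < w u} := by
  have hbound (u : V) : |w u| ≤ √D := Real.abs_le_sqrt (hD u)
  have hD0 : 0 ≤ D := by
    by_contra! h
    have : IsEmpty V := ⟨fun u => ((sq_nonneg _).trans (hD u)).not_gt h⟩
    simp at hunit
  have hmass : ∑ u, |w u| = 2 * ∑ u, (w u)⁺ := by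
    have habs (u : V) : |w u| = 2 * (w u)⁺ - w u := by
      have := abs_add_eq_two_nsmul_posPart (w u)
      rw [two_nsmul] at this
      linarith
    simp_rw [habs]
    rw [sum_sub_distrib, ← mul_sum, hsum, sub_zero]
  have hposPart : ∑ u, (w u)⁺ ≤ √D * #{u | 0 < w u} := by
    calc ∑ u, (w u)⁺ ≤ ∑ u, if 0 < w u then √D else 0 := by
          refine sum_le_sum fun u _ => ?_
          split_ifs with h
          · rw [posPart_of_nonneg h.le]
            exact (le_abs_self _).trans (hbound u)
          · rw [posPart_of_nonpos (not_lt.1 h)]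
      _ = √D * #{u | 0 < w u} := by rw [← sum_filter, sum_const, nsmul_eq_mul, mul_comm]
  calc 1 = ∑ u, |w u| * |w u| := by simp only [abs_mul_abs_self, ← hunit, dotProduct]
    _ ≤ ∑ u, √D * |w u| := by gcongr with u; exact hbound u
    _ = 2 * √D * ∑ u, (w u)⁺ := by rw [← mul_sum, hmass]; ring
    _ ≤ 2 * √D * (√D * #{u | 0 < w u}) := by gcongr
    _ = 2 * (√D * √D) * #{u | 0 < w u} := by ring
    _ = 2 * D * #{u | 0 < w u} := by rw [Real.mul_self_sqrt hD0]

lemma card_pos_add_card_neg_le (w : V → ℝ) :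
    #{u | 0 < w u} + #{u | w u < 0} ≤ Fintype.card V := by
  rw [← card_union_of_disjoint (disjoint_filter.2 fun u _ hpos hneg => hpos.not_gt hneg)]
  exact card_le_univ _

lemma exists_le_hasSpectralGap_of_posPart (hn : Fintype.card V ≤ 2.04 * τ) (hτ : 0 < τ)
    (hsum : ∑ u, w u = 0) (hunit : w ⬝ᵥ w = 1) (hw : ∀ u, w u ^ 2 ≤ Fintype.card V / τ ^ 2)
    (hquad : τ * (w⁺ ⬝ᵥ w⁺) ≤ w⁺ ⬝ᵥ (G.adjMatrix ℝ *ᵥ w⁺)) :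
    ∃ H ≤ G, ∃ i, τ ≤ specRad H ∧ HasSpectralGap H (1 / 10) i := by
  have hcard : (#{u | 0 < w u} + #{u | w u < 0} : ℝ) ≤ Fintype.card V := by
    exact_mod_cast card_pos_add_card_neg_le w
  set n : ℝ := (Fintype.card V : ℝ)
  have hpos := one_le_two_mul_mul_card_pos hsum hunit hw
  have hneg : 1 ≤ 2 * (n / τ ^ 2) * #{u | w u < 0} := by
    simpa using one_le_two_mul_mul_card_pos (w := -w) (by simpa using hsum) (by simpa using hunit)
      (by simpa using hw)
  have hne : w⁺ ≠ 0 := by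
    intro h
    have hnonpos (u : V) : ¬ 0 < w u := by simpa using congrFun h u
    simp [hnonpos] at hpos
    linarith
  have hsupp : univ.filter (fun u => w⁺ u ≠ 0) = univ.filter (fun u => 0 < w u) := by simp
  refine exists_le_hasSpectralGap_of_card_support_le (by norm_num) hne hquad ?_
  rw [hsupp]
  rw [mul_div_assoc', div_mul_eq_mul_div, one_le_div (by positivity)] at hneg
  have hn0 : 0 < n := by
    by_contra! h
    nlinarith [sq_pos_of_pos hτ, (Nat.cast_nonneg #{u | w u < 0} : (0 : ℝ) ≤ _)]
  have hfrac : 0.12 * n ≤ #{u | w u < 0} := by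
    have hsq : n ^ 2 ≤ (2.04 * τ) ^ 2 := by gcongr
    refine le_of_mul_le_mul_left ?_ hn0
    norm_num [mul_pow] at hsq ⊢
    linarith [sq_nonneg n]
  norm_num at hn hfrac ⊢
  linarith

theorem exists_le_hasSpectralGap_of_two_large (hτ : 0 < τ) (hn : Fintype.card V ≤ 2.04 * τ)
    {i j : V} (hij : i ≠ j) (hi : τ ≤ adjEigenvalue G i) (hj : τ ≤ adjEigenvalue G j) :
    ∃ H ≤ G, ∃ i, τ ≤ specRad H ∧ HasSpectralGap H (1 / 10) i := by
  obtain ⟨w, hsum, hunit, hquad, hw⟩ :=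
    exists_sum_eq_zero_le_dotProduct_adjMatrix_mulVec hτ hij hi hj
  by_cases hpos : τ * (w⁺ ⬝ᵥ w⁺) ≤ w⁺ ⬝ᵥ (G.adjMatrix ℝ *ᵥ w⁺)
  · exact exists_le_hasSpectralGap_of_posPart hn hτ hsum hunit hw hpos
  · have hneg : τ * (w⁻ ⬝ᵥ w⁻) ≤ w⁻ ⬝ᵥ (G.adjMatrix ℝ *ᵥ w⁻) := by
      have := dotProduct_adjMatrix_mulVec_le_posPart_add_negPart G w
      rw [dotProduct_self_eq_posPart_add_negPart] at hunit
      linarith [congrArg (τ * ·) hunit]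
    rw [← posPart_neg] at hneg
    exact exists_le_hasSpectralGap_of_posPart hn hτ (by simpa using hsum) (by simpa using hunit)
      (by simpa using hw) hneg

end TwoLargeEigenvalues

section RichPairs

variable {V : Type*} {G : SimpleGraph V} {P Q : Finset V} {K k : ℕ}

lemma IsPathIn.hasCycleOfLength {W : Finset V} {l : List V} {x z : V} (h : IsPathIn G W (x :: l))
    (hlen : 2 ≤ l.length) (hlast : z ∈ (x :: l).getLast?) (hclose : G.Adj z x) :
    HasCycleOfLength G (l.length + 1) := by
  refine hasCycleOfLength_of_isChain (x :: l) h.isChain h.nodup (by simpa using hlen) (by simp) ?_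
  rw [List.getLast?_eq_getLast_of_ne_nil (List.cons_ne_nil x l), Option.mem_some_iff] at hlast
  rwa [hlast]

/-- Disjoint vertex sets `P` and `Q` of size at least `K` such that any two vertices of one set
have at least `K` common neighbours in the other set. -/
structure IsRichPair (G : SimpleGraph V) (P Q : Finset V) (K : ℕ) : Prop where
  disjoint : Disjoint P Q
  le_card_left : K ≤ #P
  le_card_right : K ≤ #Q
  le_card_common_left : ∀ u ∈ P, ∀ v ∈ P, K ≤ #{q ∈ Q | G.Adj u q ∧ G.Adj v q}
  le_card_common_right : ∀ u ∈ Q, ∀ v ∈ Q, K ≤ #{p ∈ P | G.Adj u p ∧ G.Adj v p}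

lemma exists_adj_notMem_of_card_lt_degreeIn {W F : Finset V} {v : V} (h : #F < degreeIn G W v) :
    ∃ w ∈ W, G.Adj v w ∧ w ∉ F := by
  obtain ⟨w, hw, hwF⟩ := exists_mem_notMem_of_card_lt_card h
  exact ⟨w, (mem_filter.1 hw).1, (mem_filter.1 hw).2, hwF⟩

lemma exists_adj_adj_of_card_lt {u v : V} (h : #Q < degreeIn G Q u + degreeIn G Q v) :
    ∃ q ∈ Q, G.Adj u q ∧ G.Adj v q := by
  obtain ⟨q, hq⟩ := inter_nonempty_of_card_lt_card_add_card (filter_subset (G.Adj u) Q)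
    (filter_subset (G.Adj v) Q) h
  simp only [mem_inter, mem_filter] at hq
  exact ⟨q, hq.1.1, hq.1.2, hq.2.2⟩

lemma hasCycleOfLength_three {a b c : V} (hab : G.Adj a b) (hbc : G.Adj b c) (hca : G.Adj c a) :
    HasCycleOfLength G 3 :=
  hasCycleOfLength_of_isChain [a, b, c] (by simp [hab, hbc]) (by simp [hab.ne, hbc.ne, hca.ne'])
    (by simp) (by simp) hca

namespace IsRichPair

lemma symm (h : IsRichPair G P Q K) : IsRichPair G Q P K :=
  ⟨h.disjoint.symm, h.le_card_right, h.le_card_left, h.le_card_common_right,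
    h.le_card_common_left⟩

lemma exists_adj_adj_notMem (h : IsRichPair G P Q K) {F : Finset V} {u v : V} (hu : u ∈ P)
    (hv : v ∈ P) (hF : #F < K) : ∃ q ∈ Q, G.Adj u q ∧ G.Adj v q ∧ q ∉ F := by
  obtain ⟨q, hq, hqF⟩ :=
    exists_mem_notMem_of_card_lt_card (hF.trans_le (h.le_card_common_left u hu v hv))
  obtain ⟨hqQ, huq, hvq⟩ := mem_filter.1 hq
  exact ⟨q, hqQ, huq, hvq, hqF⟩

lemma exists_isPathIn_sdiff (h : IsRichPair G P Q K) :
    ∀ (k : ℕ) (F : Finset V) (u v : V), u ∈ P → v ∈ P → u ≠ v → u ∉ F → v ∉ F →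
      #F + 2 * k + 2 ≤ K →
      ∃ l, IsPathIn G ((P ∪ Q) \ F) (u :: l) ∧ l.length = 2 * k + 2 ∧ v ∈ (u :: l).getLast?
  | 0, F, u, v, hu, hv, huv, huF, hvF, hK => by
    obtain ⟨q, hqQ, huq, hvq, hqF⟩ := h.exists_adj_adj_notMem (F := F) hu hv (by omega)
    exact ⟨[q, v], ⟨by simp [huq, hvq.symm], by simp [huv, huq.ne, hvq.ne'], by simp [*]⟩,
      by simp⟩
  | k + 1, F, u, v, hu, hv, huv, huF, hvF, hK => by
    obtain ⟨w, hw, hwF⟩ := exists_mem_notMem_of_card_lt_card (s := insert u (insert v F)) (t := P)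
      (by grind [h.le_card_left, card_insert_le u (insert v F), card_insert_le v F])
    obtain ⟨hwu, hwv, hwF⟩ : w ≠ u ∧ w ≠ v ∧ w ∉ F := by simpa using hwF
    obtain ⟨q, hqQ, huq, hwq, hqF⟩ := h.exists_adj_adj_notMem (F := F) hu hw (by omega)
    have hvq : v ≠ q := fun e => disjoint_left.1 h.disjoint hv (e ▸ hqQ)
    obtain ⟨l, hl, hlen, hlast⟩ := h.exists_isPathIn_sdiff k (insert u (insert q F)) w v hw hv hwv
      (by simp [hwu, hwq.ne, hwF]) (by simp [huv.symm, hvq, hvF])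
      (by grind [card_insert_le u (insert q F), card_insert_le q F])
    have havoid (x : V) (hx : x ∈ w :: l) : x ≠ u ∧ x ≠ q := by
      have := (mem_sdiff.1 (hl.subset x hx)).2
      simp only [mem_insert, not_or] at this
      exact ⟨this.1, this.2.1⟩
    have hlF : IsPathIn G ((P ∪ Q) \ F) (w :: l) :=
      hl.mono (sdiff_subset_sdiff subset_rfl ((subset_insert q F).trans (subset_insert u _)))
    have hql : IsPathIn G ((P ∪ Q) \ F) (q :: w :: l) := hlF.cons (by simp [hqQ, hqF])
      (fun hq => (havoid q hq).2 rfl) (by simpa using hwq.symm)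
    refine ⟨q :: w :: l, hql.cons (by simp [hu, huF]) ?_ (by simpa using huq),
      by simp [hlen]; omega, by simpa using hlast⟩
    rw [List.mem_cons, not_or]
    exact ⟨huq.ne, fun hul => (havoid u hul).1 rfl⟩

lemma hasCycleOfLength_even (h : IsRichPair G P Q (2 * k + 4)) :
    HasCycleOfLength G (2 * k + 4) := by
  obtain ⟨u, hu, v, hv, huv⟩ := one_lt_card.1 (show 1 < #P by have := h.le_card_left; omega)
  obtain ⟨q, -, huq, hvq, -⟩ := h.exists_adj_adj_notMem (F := ∅) hu hv (by simp)
  obtain ⟨l, hl, hlen, hlast⟩ := h.exists_isPathIn_sdiff k {q} u v hu hv huv (by simp [huq.ne])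
    (by simp [hvq.ne]) (by simp; omega)
  have hql := hl.cons_insert (fun hq => by simpa using hl.subset q hq) (by simpa using huq.symm)
  simpa [hlen] using hql.hasCycleOfLength (by simp; omega) (by simpa using hlast) hvq

lemma hasCycleOfLength_odd_of_adj (h : IsRichPair G P Q (2 * k + 3)) {s t : V} (hst : G.Adj s t)
    (hdeg : #Q < degreeIn G Q s + degreeIn G Q t) (hs : 3 ≤ degreeIn G Q s)
    (ht : 3 ≤ degreeIn G Q t) : HasCycleOfLength G (2 * k + 3) := by
  rcases k with _ | k
  · obtain ⟨q, -, hsq, htq⟩ := exists_adj_adj_of_card_lt hdeg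
    exact hasCycleOfLength_three hst htq hsq.symm
  obtain ⟨a, haQ, hsa, ha⟩ := exists_adj_notMem_of_card_lt_degreeIn (F := {s, t})
    (card_le_two.trans_lt hs)
  obtain ⟨b, hbQ, htb, hb⟩ := exists_adj_notMem_of_card_lt_degreeIn (F := {s, a})
    (card_le_two.trans_lt ht)
  obtain ⟨hbs, hba⟩ : b ≠ s ∧ b ≠ a := by simpa using hb
  obtain ⟨l, hl, hlen, hlast⟩ := h.symm.exists_isPathIn_sdiff k {s, t} b a hbQ haQ hba
    (by simp [hbs, htb.ne']) ha (by grind [card_le_two (a := s) (b := t)])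
  have havoid (x : V) (hx : x ∈ b :: l) : x ≠ s ∧ x ≠ t := by
    simpa using (mem_sdiff.1 (hl.subset x hx)).2
  have htl := hl.cons_insert (fun hmem => (havoid t hmem).2 rfl) (by simpa using htb)
  have hstl := htl.cons_insert (x := s)
    (by rw [List.mem_cons, not_or]; exact ⟨hst.ne, fun hmem => (havoid s hmem).1 rfl⟩)
    (by simpa using hst)
  convert hstl.hasCycleOfLength (by simp) (by simpa using hlast) hsa.symm using 1
  simp [hlen]
  omega

lemma hasCycleOfLength_odd_of_degreeIn (h : IsRichPair G P Q (2 * k + 3)) {s : V}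
    (hdeg : ∀ p ∈ P, #Q < degreeIn G Q p + degreeIn G Q s) (hP : 2 ≤ degreeIn G P s)
    (hQ : 1 ≤ degreeIn G Q s) : HasCycleOfLength G (2 * k + 3) := by
  rcases k with _ | k
  · obtain ⟨p, hpP, hsp, -⟩ := exists_adj_notMem_of_card_lt_degreeIn (F := ∅)
      (Nat.lt_of_lt_of_le two_pos hP)
    obtain ⟨q, -, hpq, hsq⟩ := exists_adj_adj_of_card_lt (hdeg p hpP)
    exact hasCycleOfLength_three hsp hpq hsq.symm
  obtain ⟨q, hqQ, hsq, -⟩ := exists_adj_notMem_of_card_lt_degreeIn (F := ∅) hQ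
  obtain ⟨p, hpP, hqp, -, hps⟩ := h.symm.exists_adj_adj_notMem (F := {s}) hqQ hqQ (by simp)
  obtain ⟨r, hrP, hsr, hrp⟩ := exists_adj_notMem_of_card_lt_degreeIn (F := {p}) hP
  rw [mem_singleton] at hps hrp
  have hrq : r ≠ q := fun e => disjoint_left.1 h.disjoint hrP (e ▸ hqQ)
  obtain ⟨l, hl, hlen, hlast⟩ := h.exists_isPathIn_sdiff k {s, q} p r hpP hrP (Ne.symm hrp)
    (by simp [hps, hqp.ne']) (by simp [hrq, hsr.ne']) (by grind [card_le_two (a := s) (b := q)])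
  have havoid (x : V) (hx : x ∈ p :: l) : x ≠ s ∧ x ≠ q := by
    simpa using (mem_sdiff.1 (hl.subset x hx)).2
  have hql := hl.cons_insert (fun hmem => (havoid q hmem).2 rfl) (by simpa using hqp)
  have hsql := hql.cons_insert (x := s)
    (by rw [List.mem_cons, not_or]; exact ⟨hsq.ne, fun hmem => (havoid s hmem).1 rfl⟩)
    (by simpa using hsq)
  convert hsql.hasCycleOfLength (by simp) (by simpa using hlast) hsr.symm using 1
  simp [hlen]
  omega

end IsRichPair

end RichPairs

section NearlyCompletePairs

variable {V : Type*} {G : SimpleGraph V} {A B P Q W W' : Finset V} {K k : ℕ}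

lemma degreeIn_mono (h : W ⊆ W') (v : V) : degreeIn G W v ≤ degreeIn G W' v :=
  card_le_card (filter_subset_filter _ h)

lemma degreeIn_univ [Fintype V] (v : V) : degreeIn G univ v = G.degree v := by
  rw [← card_neighborFinset_eq_degree, neighborFinset_eq_filter, degreeIn]

lemma degreeIn_add_card_filter_not_adj (W : Finset V) (v : V) :
    degreeIn G W v + #{w ∈ W | ¬ G.Adj v w} = #W :=
  card_filter_add_card_filter_not _

lemma card_add_degreeIn_le (h : W ⊆ W') (v : V) :
    #W + degreeIn G W' v ≤ #W' + degreeIn G W v := by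
  have hW := degreeIn_add_card_filter_not_adj (G := G) W v
  have hW' := degreeIn_add_card_filter_not_adj (G := G) W' v
  have := card_le_card (filter_subset_filter (fun w => ¬ G.Adj v w) h)
  omega

lemma degreeIn_add_degreeIn_le (W : Finset V) (u v : V) :
    degreeIn G W u + degreeIn G W v ≤ #W + #{w ∈ W | G.Adj u w ∧ G.Adj v w} := by
  rw [degreeIn, degreeIn, ← card_union_add_card_inter, ← filter_and]
  exact Nat.add_le_add_right
    (card_le_card (union_subset (filter_subset _ _) (filter_subset _ _))) _

lemma card_interedges_eq_sum_degreeIn (G : SimpleGraph V) (A B : Finset V) :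
    #(G.interedges A B) = ∑ u ∈ A, degreeIn G B u := by
  simp only [interedges_def, card_filter, sum_product, degreeIn]

lemma exists_subset_forall_card_sub_degreeIn_le {s t : ℝ} (hs : 0 < s)
    (h : #A * #B - s * t ≤ #(G.interedges A B)) :
    ∃ P ⊆ A, #A - t ≤ #P ∧ ∀ u ∈ P, #B - degreeIn G B u ≤ s := by
  set good := {u ∈ A | #B - degreeIn G B u ≤ s}
  set bad := {u ∈ A | ¬ (#B - degreeIn G B u ≤ s)}
  have hsplit : (#good + #bad : ℝ) = #A := by exact_mod_cast card_filter_add_card_filter_not _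
  have hbad : #bad * s ≤ t * s := by
    calc #bad * s = ∑ _ ∈ bad, s := by rw [sum_const, nsmul_eq_mul]
      _ ≤ ∑ u ∈ bad, (#B - degreeIn G B u : ℝ) :=
          sum_le_sum fun u hu => (not_le.1 (mem_filter.1 hu).2).le
      _ ≤ ∑ u ∈ A, (#B - degreeIn G B u : ℝ) :=
          sum_le_sum_of_subset_of_nonneg (filter_subset _ _) fun u _ _ =>
            sub_nonneg.2 (Nat.cast_le.2 (card_filter_le _ _))
      _ = #A * #B - #(G.interedges A B) := by
          rw [sum_sub_distrib, sum_const, nsmul_eq_mul, card_interedges_eq_sum_degreeIn,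
            Nat.cast_sum]
      _ ≤ t * s := by linarith
  exact ⟨good, filter_subset _ _, by linarith [le_of_mul_le_mul_right hbad hs],
    fun u hu => (mem_filter.1 hu).2⟩

variable [Fintype V]

/-- The disjoint vertex sets `P` and `Q` have almost half of the vertices each, and every vertex of
one set is adjacent to almost all of the other; the tolerances are convenient absolute constants. -/
structure IsNearlyCompletePair (G : SimpleGraph V) (P Q : Finset V) : Prop where
  disjoint : Disjoint P Q
  le_card_left : 0.497 * Fintype.card V ≤ (#P : ℝ)
  le_card_right : 0.497 * Fintype.card V ≤ (#Q : ℝ)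
  card_left_le : (#P : ℝ) ≤ 0.502 * Fintype.card V
  card_right_le : (#Q : ℝ) ≤ 0.502 * Fintype.card V
  card_le_add_card : 0.998 * Fintype.card V ≤ (#P + #Q : ℝ)
  card_sub_degreeIn_left_le : ∀ u ∈ P, (#Q - degreeIn G Q u : ℝ) ≤ 0.002 * Fintype.card V
  card_sub_degreeIn_right_le : ∀ u ∈ Q, (#P - degreeIn G P u : ℝ) ≤ 0.002 * Fintype.card V

lemma exists_isNearlyCompletePair (hn : 0 < (Fintype.card V : ℝ))
    (h : (1 / 4 - 0.000002) * (Fintype.card V : ℝ) ^ 2 ≤ #(G.interedges A Aᶜ)) :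
    ∃ P Q, IsNearlyCompletePair G P Q := by
  have hcard : (#A + #Aᶜ : ℝ) = Fintype.card V := by exact_mod_cast card_add_card_compl A
  have hinter : (#(G.interedges A Aᶜ) : ℝ) ≤ #A * #Aᶜ := by
    exact_mod_cast G.card_interedges_le_mul A Aᶜ
  have hinter_comm : #(G.interedges Aᶜ A) = #(G.interedges A Aᶜ) :=
    have : Std.Symm G.Adj := ⟨fun _ _ => Adj.symm⟩
    Rel.card_interedges_comm _ _
  set n : ℝ := (Fintype.card V : ℝ)
  have hbalance : (#A - #Aᶜ : ℝ) ^ 2 ≤ (0.004 * n) ^ 2 := by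
    have : (#A - #Aᶜ : ℝ) ^ 2 = n ^ 2 - 4 * (#A * #Aᶜ) := by rw [← hcard]; ring
    rw [this, mul_pow]
    norm_num at h ⊢
    linarith [sq_nonneg n]
  obtain ⟨hbalance₁, hbalance₂⟩ := abs_le.1 (abs_le_of_sq_le_sq hbalance (by positivity))
  have hcut : (#A * #Aᶜ : ℝ) - 0.002 * n * (0.001 * n) ≤ #(G.interedges A Aᶜ) := by
    have : (#A * #Aᶜ : ℝ) ≤ 1 / 4 * n ^ 2 := by
      rw [← hcard]
      linarith [sq_nonneg (#A - #Aᶜ : ℝ)]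
    norm_num at h ⊢
    linarith
  obtain ⟨P, hPA, hPcard, hP⟩ := exists_subset_forall_card_sub_degreeIn_le (by positivity) hcut
  obtain ⟨Q, hQA, hQcard, hQ⟩ := exists_subset_forall_card_sub_degreeIn_le (G := G)
    (A := Aᶜ) (B := A) (s := 0.002 * n) (t := 0.001 * n) (by positivity)
    (by rwa [hinter_comm, mul_comm (#Aᶜ : ℝ)])
  have hPcard' : (#P : ℝ) ≤ #A := by exact_mod_cast card_le_card hPA
  have hQcard' : (#Q : ℝ) ≤ #Aᶜ := by exact_mod_cast card_le_card hQA
  refine ⟨P, Q, ?_, by linarith, by linarith, by linarith, by linarith, by linarith, ?_, ?_⟩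
  · exact (disjoint_compl_right (a := A)).mono hPA hQA
  · intro u hu
    have : (#Q + degreeIn G Aᶜ u : ℝ) ≤ #Aᶜ + degreeIn G Q u := by
      exact_mod_cast card_add_degreeIn_le hQA u
    linarith [hP u hu]
  · intro u hu
    have : (#P + degreeIn G A u : ℝ) ≤ #A + degreeIn G P u := by
      exact_mod_cast card_add_degreeIn_le hPA u
    linarith [hQ u hu]

namespace IsNearlyCompletePair

variable (h : IsNearlyCompletePair G P Q)
include h

lemma symm : IsNearlyCompletePair G Q P where
  disjoint := h.disjoint.symm
  le_card_left := h.le_card_right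
  le_card_right := h.le_card_left
  card_left_le := h.card_right_le
  card_right_le := h.card_left_le
  card_le_add_card := h.card_le_add_card.trans_eq (add_comm _ _)
  card_sub_degreeIn_left_le := h.card_sub_degreeIn_right_le
  card_sub_degreeIn_right_le := h.card_sub_degreeIn_left_le

lemma le_card_common (hK : (K : ℝ) ≤ Fintype.card V / 4) {u v : V} (hu : u ∈ P) (hv : v ∈ P) :
    K ≤ #{q ∈ Q | G.Adj u q ∧ G.Adj v q} := by
  have hcommon : (degreeIn G Q u + degreeIn G Q v : ℝ) ≤
      #Q + #{q ∈ Q | G.Adj u q ∧ G.Adj v q} := by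
    exact_mod_cast degreeIn_add_degreeIn_le Q u v
  rw [← Nat.cast_le (α := ℝ)]
  linarith [h.card_sub_degreeIn_left_le u hu, h.card_sub_degreeIn_left_le v hv, h.le_card_right]

lemma isRichPair (hK : (K : ℝ) ≤ Fintype.card V / 4) : IsRichPair G P Q K where
  disjoint := h.disjoint
  le_card_left := by rw [← Nat.cast_le (α := ℝ)]; linarith [h.le_card_left]
  le_card_right := by rw [← Nat.cast_le (α := ℝ)]; linarith [h.le_card_right]
  le_card_common_left _ hu _ hv := h.le_card_common hK hu hv
  le_card_common_right _ hu _ hv := h.symm.le_card_common hK hu hv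

lemma degree_le (u : V) :
    (G.degree u : ℝ) ≤ degreeIn G P u + degreeIn G Q u + 0.002 * Fintype.card V := by
  have hcover : #(P ∪ Q) + degreeIn G univ u ≤ Fintype.card V + degreeIn G (P ∪ Q) u :=
    card_add_degreeIn_le (subset_univ _) u
  have hunion : degreeIn G (P ∪ Q) u ≤ degreeIn G P u + degreeIn G Q u := by
    rw [degreeIn, filter_union]
    exact card_union_le _ _
  rw [card_union_of_disjoint h.disjoint, degreeIn_univ] at hcover
  have : (#P + #Q + G.degree u : ℝ) ≤ Fintype.card V + (degreeIn G P u + degreeIn G Q u) := by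
    exact_mod_cast hcover.trans (Nat.add_le_add_left hunion _)
  linarith [h.card_le_add_card]

lemma not_adj_of_le_degreeIn (hn : 1000 ≤ (Fintype.card V : ℝ))
    (hrich : IsRichPair G P Q (2 * k + 3)) (hcycle : ¬ HasCycleOfLength G (2 * k + 3)) {u v : V}
    (hu : 0.255 * Fintype.card V ≤ (degreeIn G Q u : ℝ))
    (hv : 0.255 * Fintype.card V ≤ (degreeIn G Q v : ℝ)) : ¬ G.Adj u v := by
  refine fun huv => hcycle (hrich.hasCycleOfLength_odd_of_adj huv ?_ ?_ ?_)
  · rw [← Nat.cast_lt (α := ℝ)]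
    push_cast
    linarith [h.card_right_le]
  all_goals
    rw [← Nat.cast_le (α := ℝ), Nat.cast_ofNat]
    linarith

lemma degreeIn_lt_or_degreeIn_lt (hn : 1000 ≤ (Fintype.card V : ℝ))
    (hrich : IsRichPair G P Q (2 * k + 3)) (hcycle : ¬ HasCycleOfLength G (2 * k + 3)) (u : V) :
    (degreeIn G P u : ℝ) < 0.003 * Fintype.card V ∨
      (degreeIn G Q u : ℝ) < 0.003 * Fintype.card V := by
  by_contra! hlarge
  refine hcycle (hrich.hasCycleOfLength_odd_of_degreeIn (s := u) (fun p hp => ?_) ?_ ?_)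
  · rw [← Nat.cast_lt (α := ℝ)]
    push_cast
    linarith [h.card_sub_degreeIn_left_le p hp]
  · rw [← Nat.cast_le (α := ℝ)]
    push_cast
    linarith
  · rw [← Nat.cast_le (α := ℝ)]
    push_cast
    linarith

lemma lt_degree_of_mem_left (hn : 0 < (Fintype.card V : ℝ)) {u : V} (hu : u ∈ P) :
    0.26 * Fintype.card V < (G.degree u : ℝ) := by
  have : (degreeIn G Q u : ℝ) ≤ G.degree u := by
    rw [← degreeIn_univ]
    exact_mod_cast degreeIn_mono (subset_univ Q) u
  linarith [h.card_sub_degreeIn_left_le u hu, h.le_card_right]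

lemma exists_isIndepSet_isIndepSet (hn : 1000 ≤ (Fintype.card V : ℝ))
    (hrich : IsRichPair G P Q (2 * k + 3)) (hcycle : ¬ HasCycleOfLength G (2 * k + 3)) :
    ∃ X Y : Finset V, Disjoint X Y ∧ G.IsIndepSet (X : Set V) ∧ G.IsIndepSet (Y : Set V) ∧
      (∀ u ∉ X ∪ Y, (G.degree u : ℝ) ≤ 0.26 * Fintype.card V) ∧
      (#(X ∪ Y)ᶜ : ℝ) ≤ 0.002 * Fintype.card V := by
  set n : ℝ := (Fintype.card V : ℝ)
  let high : Finset V := {u | 0.26 * n < G.degree u}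
  have hY (u : V) (hu : u ∈ high) (huQ : ¬ 0.255 * n ≤ (degreeIn G Q u : ℝ)) :
      0.255 * n ≤ (degreeIn G P u : ℝ) := by
    have := (mem_filter.1 hu).2
    rcases h.degreeIn_lt_or_degreeIn_lt hn hrich hcycle u with hsmall | hsmall <;>
      linarith [h.degree_le u]
  refine ⟨{u ∈ high | 0.255 * n ≤ (degreeIn G Q u : ℝ)},
    {u ∈ high | ¬ 0.255 * n ≤ (degreeIn G Q u : ℝ)}, disjoint_filter_filter_not _ _ _,
    fun u hu v hv _ => ?_, fun u hu v hv _ => ?_, fun u hu => ?_, ?_⟩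
  · exact h.not_adj_of_le_degreeIn hn hrich hcycle (mem_filter.1 hu).2 (mem_filter.1 hv).2
  · obtain ⟨hu, huQ⟩ := mem_filter.1 hu
    obtain ⟨hv, hvQ⟩ := mem_filter.1 hv
    exact h.symm.not_adj_of_le_degreeIn hn hrich.symm hcycle (hY u hu huQ) (hY v hv hvQ)
  · rw [filter_union_filter_not_eq] at hu
    simpa [high] using hu
  · rw [filter_union_filter_not_eq]
    have hsub : P ∪ Q ⊆ high := union_subset
      (fun u hu => mem_filter.2 ⟨mem_univ u, h.lt_degree_of_mem_left (by linarith) hu⟩)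
      (fun u hu => mem_filter.2 ⟨mem_univ u, h.symm.lt_degree_of_mem_left (by linarith) hu⟩)
    have hcard : #highᶜ + (#P + #Q) ≤ Fintype.card V := by
      rw [← card_union_of_disjoint h.disjoint, ← card_compl_add_card high]
      gcongr
    have hcard' : (#highᶜ + (#P + #Q) : ℝ) ≤ Fintype.card V := mod_cast hcard
    linarith [h.card_le_add_card]

end IsNearlyCompletePair

end NearlyCompletePairs

section NegativeEigenvalue

open Matrix

variable {V : Type*} [Fintype V] {G : SimpleGraph V} {X Y L : Finset V}

lemma two_mul_sum_sum_le_dotProduct_adjMatrix_mulVec (G : SimpleGraph V) {A : Finset V} {x : V → ℝ}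
    (hA : ∀ u ∈ A, 0 ≤ x u) (hAc : ∀ u ∈ Aᶜ, x u ≤ 0) :
    2 * ∑ u ∈ A, ∑ v ∈ Aᶜ, G.adjMatrix ℝ u v * (x u * x v) ≤ x ⬝ᵥ (G.adjMatrix ℝ *ᵥ x) := by
  let g (u v : V) : ℝ := G.adjMatrix ℝ u v * (x u * x v)
  have hadj (u v : V) : 0 ≤ G.adjMatrix ℝ u v := by
    rw [adjMatrix_apply]
    split_ifs <;> simp
  have hquad : x ⬝ᵥ (G.adjMatrix ℝ *ᵥ x) =
      (∑ u ∈ A, ∑ v ∈ A, g u v + ∑ u ∈ A, ∑ v ∈ Aᶜ, g u v) +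
        (∑ u ∈ Aᶜ, ∑ v ∈ A, g u v + ∑ u ∈ Aᶜ, ∑ v ∈ Aᶜ, g u v) := by
    simp only [dotProduct_mulVec_adjMatrix, ← sum_add_distrib, sum_add_sum_compl, g,
      adjMatrix_apply, ite_mul, one_mul, zero_mul]
  have hcomm : ∑ u ∈ Aᶜ, ∑ v ∈ A, g u v = ∑ u ∈ A, ∑ v ∈ Aᶜ, g u v := by
    rw [sum_comm]
    simp only [g, adjMatrix_apply, G.adj_comm, mul_comm]
  have hpos : 0 ≤ ∑ u ∈ A, ∑ v ∈ A, g u v := sum_nonneg fun u hu => sum_nonneg fun v hv =>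
    mul_nonneg (hadj u v) (mul_nonneg (hA u hu) (hA v hv))
  have hneg : 0 ≤ ∑ u ∈ Aᶜ, ∑ v ∈ Aᶜ, g u v := sum_nonneg fun u hu => sum_nonneg fun v hv =>
    mul_nonneg (hadj u v) (mul_nonneg_of_nonpos_of_nonpos (hAc u hu) (hAc v hv))
  linarith

lemma exists_adjEigenvalue_sq_le_card_interedges_compl {i : V} (hi : adjEigenvalue G i ≤ 0) :
    ∃ A : Finset V, adjEigenvalue G i ^ 2 ≤ #(G.interedges A Aᶜ) := by
  set x := adjEigenvector G i with hx
  set A : Finset V := {u | 0 ≤ x u}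
  set S := ∑ u ∈ A, ∑ v ∈ Aᶜ, G.adjMatrix ℝ u v * (x u * x v)
  have hS : 2 * S ≤ adjEigenvalue G i := by
    rw [← dotProduct_adjMatrix_mulVec_adjEigenvector, ← hx]
    exact two_mul_sum_sum_le_dotProduct_adjMatrix_mulVec G (fun u hu => (mem_filter.1 hu).2)
      fun u hu => (by simpa [A] using hu : x u < 0).le
  have hmass : ∑ u ∈ A, x u ^ 2 + ∑ u ∈ Aᶜ, x u ^ 2 = 1 := by
    rw [sum_add_sum_compl, hx, sum_adjEigenvector_sq]
  have hmul : 4 * ((∑ u ∈ A, x u ^ 2) * ∑ u ∈ Aᶜ, x u ^ 2) ≤ 1 := by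
    have := four_mul_le_sq_add (∑ u ∈ A, x u ^ 2) (∑ u ∈ Aᶜ, x u ^ 2)
    rw [hmass] at this
    linarith
  refine ⟨A, ?_⟩
  calc adjEigenvalue G i ^ 2 ≤ (2 * S) ^ 2 := by nlinarith
    _ = 4 * S ^ 2 := by ring
    _ ≤ 4 * (#(G.interedges A Aᶜ) * ((∑ u ∈ A, x u ^ 2) * ∑ v ∈ Aᶜ, x v ^ 2)) := by
        gcongr
        exact sq_sum_sum_adjMatrix_mul_le G A Aᶜ x
    _ = #(G.interedges A Aᶜ) * (4 * ((∑ u ∈ A, x u ^ 2) * ∑ v ∈ Aᶜ, x v ^ 2)) := by ring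
    _ ≤ #(G.interedges A Aᶜ) := mul_le_of_le_one_right (Nat.cast_nonneg _) hmul

/-- The ordered triangles of `G`: each triangle appears here six times. -/
noncomputable def orderedTriangles (G : SimpleGraph V) : Finset (V × V × V) :=
  {t | G.Adj t.1 t.2.1 ∧ G.Adj t.2.1 t.2.2 ∧ G.Adj t.2.2 t.1}

lemma trace_adjMatrix_pow_three (G : SimpleGraph V) :
    trace (G.adjMatrix ℝ ^ 3) = (#(orderedTriangles G) : ℝ) := by
  simp only [orderedTriangles, natCast_card_filter, Fintype.sum_prod_type, trace, diag_apply,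
    pow_succ', pow_zero, mul_one, mul_apply, adjMatrix_apply, mul_sum, ite_and, ite_mul, one_mul,
    zero_mul]

lemma card_orderedTriangles_filter_fst_le (G : SimpleGraph V) (L : Finset V) :
    #{t ∈ orderedTriangles G | t.1 ∈ L} ≤ ∑ u ∈ L, G.degree u ^ 2 := by
  calc #{t ∈ orderedTriangles G | t.1 ∈ L}
      ≤ #(L.sigma fun u => G.neighborFinset u ×ˢ G.neighborFinset u) := by
        refine card_le_card_of_injOn (fun t => ⟨t.1, t.2⟩) (fun t ht => ?_)
          fun s _ t _ hst => by grind
        obtain ⟨ht, hL⟩ := mem_filter.1 ht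
        obtain ⟨h₁, -, h₃⟩ := (mem_filter.1 ht).2
        simp [hL, h₁, h₃.symm]
    _ = ∑ u ∈ L, G.degree u ^ 2 := by simp only [card_sigma, card_product, sq]; rfl

lemma card_orderedTriangles_le
    (hL : ∀ t ∈ orderedTriangles G, t.1 ∈ L ∨ t.2.1 ∈ L ∨ t.2.2 ∈ L) :
    #(orderedTriangles G) ≤ 3 * ∑ u ∈ L, G.degree u ^ 2 := by
  have hrotate (f : V × V × V → V × V × V) (hf : f.Injective) (p : V × V × V → Prop)
      [DecidablePred p]
      (hp : ∀ t ∈ orderedTriangles G, p t → f t ∈ orderedTriangles G ∧ (f t).1 ∈ L) :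
      #{t ∈ orderedTriangles G | p t} ≤ ∑ u ∈ L, G.degree u ^ 2 := by
    refine (card_le_card_of_injOn f (fun t ht => ?_) hf.injOn).trans
      (card_orderedTriangles_filter_fst_le G L)
    obtain ⟨ht, hpt⟩ := mem_filter.1 ht
    exact mem_filter.2 (hp t ht hpt)
  calc #(orderedTriangles G)
      ≤ #({t ∈ orderedTriangles G | t.1 ∈ L} ∪ ({t ∈ orderedTriangles G | t.2.1 ∈ L} ∪
          {t ∈ orderedTriangles G | t.2.2 ∈ L})) := card_le_card fun t ht => by
        simp only [mem_union, mem_filter, ht, true_and]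
        exact hL t ht
    _ ≤ #{t ∈ orderedTriangles G | t.1 ∈ L} + (#{t ∈ orderedTriangles G | t.2.1 ∈ L} +
          #{t ∈ orderedTriangles G | t.2.2 ∈ L}) :=
        (card_union_le _ _).trans (Nat.add_le_add_left (card_union_le _ _) _)
    _ ≤ ∑ u ∈ L, G.degree u ^ 2 + (∑ u ∈ L, G.degree u ^ 2 + ∑ u ∈ L, G.degree u ^ 2) := by
        gcongr
        · exact card_orderedTriangles_filter_fst_le G L
        · exact hrotate (fun t => (t.2.1, t.2.2, t.1)) (fun s t h => by grind) _
            fun t ht hu => ⟨by simp_all [orderedTriangles], hu⟩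
        · exact hrotate (fun t => (t.2.2, t.1, t.2.1)) (fun s t h => by grind) _
            fun t ht hu => ⟨by simp_all [orderedTriangles], hu⟩
    _ = 3 * ∑ u ∈ L, G.degree u ^ 2 := by ring

lemma exists_mem_compl_of_mem_orderedTriangles (hX : G.IsIndepSet (X : Set V))
    (hY : G.IsIndepSet (Y : Set V)) {t : V × V × V} (ht : t ∈ orderedTriangles G) :
    t.1 ∈ (X ∪ Y)ᶜ ∨ t.2.1 ∈ (X ∪ Y)ᶜ ∨ t.2.2 ∈ (X ∪ Y)ᶜ := by
  obtain ⟨h₁, h₂, h₃⟩ := (mem_filter.1 ht).2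
  have hX (u v : V) (huv : G.Adj u v) (hu : u ∈ X) : v ∉ X := fun hv => hX hu hv huv.ne huv
  have hY (u v : V) (huv : G.Adj u v) (hu : u ∈ Y) : v ∉ Y := fun hv => hY hu hv huv.ne huv
  have := hX _ _ h₁
  have := hX _ _ h₂
  have := hX _ _ h₃
  have := hY _ _ h₁
  have := hY _ _ h₂
  have := hY _ _ h₃
  simp only [mem_compl, mem_union]
  tauto

lemma card_interedges_univ_le_of_isIndepSet (hX : G.IsIndepSet (X : Set V))
    (hY : G.IsIndepSet (Y : Set V)) :
    #(G.interedges univ univ) ≤ 2 * (#X * #Y) + 2 * ∑ u ∈ (X ∪ Y)ᶜ, G.degree u := by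
  set L := (X ∪ Y)ᶜ with hL
  have hcover : G.interedges univ univ ⊆
      (X ×ˢ Y ∪ Y ×ˢ X) ∪ (G.interedges L univ ∪ G.interedges univ L) := by
    rintro ⟨u, v⟩ huv
    have huv : G.Adj u v := (mem_filter.1 huv).2
    have hX : u ∈ X → v ∉ X := fun hu hv => hX hu hv huv.ne huv
    have hY : u ∈ Y → v ∉ Y := fun hu hv => hY hu hv huv.ne huv
    simp only [mem_union, mem_product, mem_interedges_iff, mem_univ, true_and, and_true, huv, hL,
      mem_compl]
    tauto
  have hdeg : #(G.interedges L univ) = ∑ u ∈ L, G.degree u := by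
    simp only [card_interedges_eq_sum_degreeIn, degreeIn_univ]
  have hcomm : #(G.interedges univ L) = #(G.interedges L univ) :=
    have : Std.Symm G.Adj := ⟨fun _ _ => Adj.symm⟩
    Rel.card_interedges_comm _ _
  calc #(G.interedges univ univ)
      ≤ (#(X ×ˢ Y) + #(Y ×ˢ X)) + (#(G.interedges L univ) + #(G.interedges univ L)) :=
        (card_le_card hcover).trans <| (card_union_le _ _).trans <|
          Nat.add_le_add (card_union_le _ _) (card_union_le _ _)
    _ = 2 * (#X * #Y) + 2 * ∑ u ∈ L, G.degree u := by
        rw [hcomm, hdeg, card_product, card_product]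
        ring

lemma two_mul_specRad_pow_three_le [Nonempty V] (G : SimpleGraph V) :
    2 * specRad G ^ 3 ≤
      specRad G * #(G.interedges univ univ) + trace (G.adjMatrix ℝ ^ 3) := by
  obtain ⟨i₀, hi₀⟩ := exists_adjEigenvalue_eq_specRad G
  have hnonneg (i : V) : 0 ≤ adjEigenvalue G i ^ 2 * (specRad G + adjEigenvalue G i) :=
    mul_nonneg (sq_nonneg _) (by linarith [neg_le_of_abs_le (abs_adjEigenvalue_le_specRad G i)])
  calc 2 * specRad G ^ 3 = adjEigenvalue G i₀ ^ 2 * (specRad G + adjEigenvalue G i₀) := by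
        rw [hi₀]
        ring
    _ ≤ ∑ i, adjEigenvalue G i ^ 2 * (specRad G + adjEigenvalue G i) :=
        single_le_sum (fun i _ => hnonneg i) (mem_univ i₀)
    _ = specRad G * #(G.interedges univ univ) + trace (G.adjMatrix ℝ ^ 3) := by
        rw [card_interedges_univ_eq_sum_adjEigenvalue_sq, trace_adjMatrix_pow, mul_sum,
          ← sum_add_distrib]
        exact sum_congr rfl fun i _ => by ring

lemma mul_le_sq_div_four {a b n : ℕ} (h : a + b = n) : a * b ≤ n ^ 2 / 4 := by
  rw [Nat.le_div_iff_mul_le (by norm_num), ← h]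
  linarith [four_mul_le_sq_add a b]

lemma sq_sub_one_div_four_le (n : ℕ) : ((n : ℝ) ^ 2 - 1) / 4 ≤ (n ^ 2 / 4 : ℕ) := by
  have hmod : n ^ 2 % 4 ≤ 1 := by
    have : n % 4 < 4 := Nat.mod_lt _ (by norm_num)
    rw [Nat.pow_mod]
    interval_cases n % 4 <;> norm_num
  have h : n ^ 2 ≤ 4 * (n ^ 2 / 4) + 1 := by omega
  have h' : (n : ℝ) ^ 2 ≤ 4 * (n ^ 2 / 4 : ℕ) + 1 := mod_cast h
  linarith

lemma specRad_sq_le_card_mul_card_add (hX : G.IsIndepSet (X : Set V))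
    (hY : G.IsIndepSet (Y : Set V))
    (hdeg : ∀ u ∉ X ∪ Y, (G.degree u : ℝ) ≤ 0.26 * Fintype.card V)
    (hn : 0 < (Fintype.card V : ℝ)) (hρ : (Fintype.card V : ℝ) ≤ 2.001 * specRad G) :
    specRad G ^ 2 ≤ #X * #Y + 0.463 * (#(X ∪ Y)ᶜ * Fintype.card V) := by
  have : Nonempty V := Fintype.card_pos_iff.1 (Nat.cast_pos.1 hn)
  set L := (X ∪ Y)ᶜ
  set n : ℝ := (Fintype.card V : ℝ)
  have hdeg_sum : ∑ u ∈ L, (G.degree u : ℝ) ≤ #L * (0.26 * n) := by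
    rw [← nsmul_eq_mul]
    exact sum_le_card_nsmul _ _ _ fun u hu => hdeg u (mem_compl.1 hu)
  have hdeg_sq_sum : ∑ u ∈ L, (G.degree u : ℝ) ^ 2 ≤ #L * (0.26 * n) ^ 2 := by
    rw [← nsmul_eq_mul]
    exact sum_le_card_nsmul _ _ _ fun u hu => by gcongr; exact hdeg u (mem_compl.1 hu)
  have hedges : (#(G.interedges univ univ) : ℝ) ≤
      2 * (#X * #Y) + 2 * ∑ u ∈ L, (G.degree u : ℝ) := by
    exact_mod_cast card_interedges_univ_le_of_isIndepSet hX hY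
  have htrace : trace (G.adjMatrix ℝ ^ 3) ≤ 3 * ∑ u ∈ L, (G.degree u : ℝ) ^ 2 := by
    rw [trace_adjMatrix_pow_three]
    exact_mod_cast card_orderedTriangles_le fun t =>
      exists_mem_compl_of_mem_orderedTriangles hX hY
  have hρ_pos : 0 < specRad G := by linarith
  have hquad : #L * n * n ≤ #L * n * (2.001 * specRad G) := by gcongr
  have hcubic : specRad G * (2 * specRad G ^ 2) ≤
      specRad G * (2 * (#X * #Y + 0.463 * (#L * n))) := by
    calc specRad G * (2 * specRad G ^ 2) = 2 * specRad G ^ 3 := by ring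
      _ ≤ specRad G * (2 * (#X * #Y) + 2 * (#L * (0.26 * n))) + 3 * (#L * (0.26 * n) ^ 2) := by
          refine (two_mul_specRad_pow_three_le G).trans ?_
          gcongr
          · linarith
          · linarith
      _ ≤ specRad G * (2 * (#X * #Y + 0.463 * (#L * n))) := by
          have : 0 ≤ #L * n * specRad G := by positivity
          norm_num at hquad ⊢
          linarith
  linarith [le_of_mul_le_mul_left hcubic hρ_pos]

lemma specRad_sq_le_of_isIndepSet (hdisj : Disjoint X Y)
    (hX : G.IsIndepSet (X : Set V)) (hY : G.IsIndepSet (Y : Set V))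
    (hdeg : ∀ u ∉ X ∪ Y, (G.degree u : ℝ) ≤ 0.26 * Fintype.card V)
    (hcard : (#(X ∪ Y)ᶜ : ℝ) ≤ 0.002 * Fintype.card V)
    (hn : 0 < (Fintype.card V : ℝ)) (hρ : (Fintype.card V : ℝ) ≤ 2.001 * specRad G) :
    specRad G ^ 2 ≤ ((Fintype.card V) ^ 2 / 4 : ℕ) := by
  wlog hXY : #X ≤ #Y generalizing X Y
  · rw [union_comm] at hdeg hcard
    exact this hdisj.symm hY hX hdeg hcard (le_of_not_ge hXY)
  have hsplit : #X + #(X ∪ Y)ᶜ + #Y = Fintype.card V := by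
    rw [← card_add_card_compl (X ∪ Y), card_union_of_disjoint hdisj, add_right_comm]
  have hY_large : 0.463 * Fintype.card V ≤ (#Y : ℝ) := by
    have : (#X + #(X ∪ Y)ᶜ + #Y : ℝ) = Fintype.card V := mod_cast hsplit
    have : (#X : ℝ) ≤ #Y := mod_cast hXY
    linarith
  -- The exceptional vertices can be moved into the smaller part `X`.
  calc specRad G ^ 2 ≤ #X * #Y + #(X ∪ Y)ᶜ * (0.463 * Fintype.card V) := by
        linarith [specRad_sq_le_card_mul_card_add hX hY hdeg hn hρ]
    _ ≤ #X * #Y + #(X ∪ Y)ᶜ * #Y := by gcongr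
    _ = ((#X + #(X ∪ Y)ᶜ) * #Y : ℕ) := by push_cast; ring
    _ ≤ ((Fintype.card V) ^ 2 / 4 : ℕ) := Nat.cast_le.2 (mul_le_sq_div_four hsplit)

lemma hasCycleOfLength_of_isNearlyCompletePair {P Q : Finset V} {ℓ : ℕ}
    (h : IsNearlyCompletePair G P Q) (hn : 1000 ≤ (Fintype.card V : ℝ))
    (hρ : (Fintype.card V : ℝ) ≤ 2.001 * specRad G)
    (hspec : ((Fintype.card V ^ 2 / 4 : ℕ) : ℝ) < specRad G ^ 2)
    (hℓ₃ : 3 ≤ ℓ) (hℓ : (ℓ : ℝ) ≤ Fintype.card V / 4) : HasCycleOfLength G ℓ := by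
  have hrich := h.isRichPair hℓ
  rcases Nat.even_or_odd' ℓ with ⟨m, hm | hm⟩
  · obtain ⟨k, rfl⟩ : ∃ k, ℓ = 2 * k + 4 := ⟨m - 2, by omega⟩
    exact hrich.hasCycleOfLength_even
  · obtain ⟨k, rfl⟩ : ∃ k, ℓ = 2 * k + 3 := ⟨m - 1, by omega⟩
    by_contra hcycle
    obtain ⟨X, Y, hdisj, hX, hY, hdeg, hcard⟩ := h.exists_isIndepSet_isIndepSet hn hrich hcycle
    exact hspec.not_ge (specRad_sq_le_of_isIndepSet hdisj hX hY hdeg hcard (by linarith) hρ)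

lemma hasCycleOfLength_of_adjEigenvalue_le {ℓ : ℕ} {i : V} (hn : 1000 ≤ (Fintype.card V : ℝ))
    (hρ : (Fintype.card V : ℝ) ≤ 2.001 * specRad G)
    (hspec : ((Fintype.card V ^ 2 / 4 : ℕ) : ℝ) < specRad G ^ 2)
    (hi : adjEigenvalue G i ≤ -((1 - 0.000001) * specRad G))
    (hℓ₃ : 3 ≤ ℓ) (hℓ : (ℓ : ℝ) ≤ Fintype.card V / 4) : HasCycleOfLength G ℓ := by
  have hρ_nonneg := specRad_nonneg G
  obtain ⟨A, hA⟩ := exists_adjEigenvalue_sq_le_card_interedges_compl (G := G) (i := i)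
    (hi.trans (by norm_num; linarith))
  have hcut : (1 / 4 - 0.000002) * (Fintype.card V : ℝ) ^ 2 ≤ #(G.interedges A Aᶜ) := by
    have hn_sq : (1000 : ℝ) ^ 2 ≤ (Fintype.card V : ℝ) ^ 2 := by gcongr
    have hfloor := sq_sub_one_div_four_le (Fintype.card V)
    calc (1 / 4 - 0.000002) * (Fintype.card V : ℝ) ^ 2
        ≤ (1 - 0.000001) ^ 2 * specRad G ^ 2 := by
          norm_num at hn_sq ⊢
          linarith
      _ = ((1 - 0.000001) * specRad G) ^ 2 := by ring
      _ ≤ (-adjEigenvalue G i) ^ 2 :=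
          pow_le_pow_left₀ (by norm_num; positivity) (by linarith) 2
      _ = adjEigenvalue G i ^ 2 := neg_sq _
      _ ≤ #(G.interedges A Aᶜ) := hA
  obtain ⟨P, Q, hPQ⟩ := exists_isNearlyCompletePair (by linarith) hcut
  exact hasCycleOfLength_of_isNearlyCompletePair hPQ hn hρ hspec hℓ₃ hℓ

end NegativeEigenvalue

section LargeSpectralRadius

variable {V : Type*} [Fintype V] {G : SimpleGraph V} {δ ε σ : ℝ} {ℓ : ℕ}

lemma hasSpectralGap_or_exists_large_adjEigenvalue [Nonempty V] (G : SimpleGraph V) (hδ : 0 ≤ δ) :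
    (∃ i, HasSpectralGap G δ i) ∨
      (∃ i j, i ≠ j ∧ (1 - δ) * specRad G ≤ adjEigenvalue G i ∧
        (1 - δ) * specRad G ≤ adjEigenvalue G j) ∨
      ∃ i, adjEigenvalue G i ≤ -((1 - δ) * specRad G) := by
  obtain ⟨i, hi⟩ := exists_adjEigenvalue_eq_specRad G
  by_cases hgap : ∀ j ≠ i, |adjEigenvalue G j| ≤ (1 - δ) * specRad G
  · exact .inl ⟨i, hi, hgap⟩
  push Not at hgap
  obtain ⟨j, hji, hj⟩ := hgap
  rcases le_abs.1 hj.le with hpos | hneg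
  · refine .inr (.inl ⟨i, j, hji.symm, ?_, hpos⟩)
    rw [hi]
    exact mul_le_of_le_one_left (specRad_nonneg G) (by linarith)
  · exact .inr (.inr ⟨j, le_neg_of_le_neg hneg⟩)

lemma card_le_mul_specRad (hδ : 0 ≤ δ) (hδ₁ : δ ≤ 1) (hn : 4 ≤ δ * Fintype.card V)
    (hspec : ((Fintype.card V ^ 2 / 4 : ℕ) : ℝ) < specRad G ^ 2) :
    (Fintype.card V : ℝ) ≤ (2 + δ / 2) * specRad G := by
  have hρ := specRad_nonneg G
  have hfloor := sq_sub_one_div_four_le (Fintype.card V)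
  have hn₄ : 4 ≤ (Fintype.card V : ℝ) :=
    hn.trans (mul_le_of_le_one_left (Nat.cast_nonneg _) hδ₁)
  refine le_of_sq_le_sq ?_ (by positivity)
  calc (Fintype.card V : ℝ) ^ 2 ≤ (4 + 2 * δ) * ((Fintype.card V ^ 2 - 1) / 4) := by nlinarith
    _ ≤ (4 + 2 * δ) * specRad G ^ 2 := by
        gcongr
        linarith
    _ ≤ (4 + 2 * δ) * specRad G ^ 2 + (δ / 2 * specRad G) ^ 2 :=
        le_add_of_nonneg_right (sq_nonneg _)
    _ = ((2 + δ / 2) * specRad G) ^ 2 := by ring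

lemma mul_card_le_mul_specRad_sq (hε : ε < 1 / 4) (hn : 1 ≤ ε * Fintype.card V)
    (hspec : ((Fintype.card V ^ 2 / 4 : ℕ) : ℝ) < specRad G ^ 2)
    (hℓ : (ℓ : ℝ) ≤ (1 / 4 - ε) * (Fintype.card V : ℝ)) :
    ℓ * Fintype.card V ≤ (1 - 2 * ε) * specRad G ^ 2 := by
  have hfloor := sq_sub_one_div_four_le (Fintype.card V)
  have hn₄ : 4 ≤ (Fintype.card V : ℝ) := by nlinarith
  calc (ℓ * Fintype.card V : ℝ) ≤ (1 / 4 - ε) * Fintype.card V * Fintype.card V := by gcongr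
    _ ≤ (1 - 2 * ε) * ((Fintype.card V ^ 2 - 1) / 4) := by nlinarith
    _ ≤ (1 - 2 * ε) * specRad G ^ 2 := by
        gcongr <;> linarith

lemma one_sub_two_mul_mul_sq_le {ρ : ℝ} (hρ : 0 ≤ ρ) (hε₁ : ε ≤ 1) (hδ : δ ≤ ε / 2)
    (hσ : (1 - δ) * ρ ≤ σ) : (1 - 2 * ε) * ρ ^ 2 ≤ (1 - ε) * σ ^ 2 := by
  have hσ' : (1 - ε / 2) * ρ ≤ σ := (mul_le_mul_of_nonneg_right (by linarith) hρ).trans hσ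
  calc (1 - 2 * ε) * ρ ^ 2 ≤ (1 - ε) * (1 - ε / 2) ^ 2 * ρ ^ 2 := by
        gcongr
        nlinarith [mul_nonneg (sq_nonneg ε) (sub_nonneg.2 hε₁)]
    _ = (1 - ε) * ((1 - ε / 2) * ρ) ^ 2 := by ring
    _ ≤ (1 - ε) * σ ^ 2 := by
        have : 0 ≤ (1 - ε / 2) * ρ := mul_nonneg (by linarith) hρ
        gcongr

end LargeSpectralRadius

/-- For every `0 < ε < 1/4` there is `N` such that every graph on `n ≥ N`
vertices with `ρ(G) > √⌊n²/4⌋` contains a cycle of length `ℓ` for every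
integer `ℓ ∈ [3, (1/4 - ε)n]`. -/
theorem spectral_consecutive_cycles (ε : ℝ) (hε0 : 0 < ε) (hε : ε < 1 / 4) :
    ∃ N : ℕ, ∀ (V : Type) (_ : Fintype V) (G : SimpleGraph V),
      N ≤ Fintype.card V →
      Real.sqrt (((Fintype.card V) ^ 2 / 4 : ℕ) : ℝ) < specRad G →
      ∀ ℓ : ℕ, 3 ≤ ℓ → (ℓ : ℝ) ≤ (1 / 4 - ε) * (Fintype.card V : ℝ) →
        ∃ (v : V) (c : G.Walk v v), c.IsCycle ∧ c.length = ℓ := by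
  obtain ⟨δ, hδ₀, hδε, hδ⟩ : ∃ δ : ℝ, 0 < δ ∧ δ ≤ ε / 2 ∧ δ ≤ 0.000001 :=
    ⟨min (ε / 2) 0.000001, by positivity, min_le_left _ _, min_le_right _ _⟩
  norm_num at hδ
  obtain ⟨N₁, hN₁⟩ := exists_forall_hasSpectralGap_hasCycleOfLength.{0}
    hδ₀ (by linarith) hε0 (by linarith)
  obtain ⟨N₂, hN₂⟩ := exists_forall_hasSpectralGap_hasCycleOfLength.{0} (δ := 1 / 10)
    (by norm_num) (by norm_num) hε0 (by linarith)
  refine ⟨max (max N₁ N₂) ⌈4 / δ⌉₊, fun V _ G hN hsqrt ℓ hℓ₃ hℓ => ?_⟩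
  simp only [max_le_iff, Nat.ceil_le, div_le_iff₀' hδ₀] at hN
  obtain ⟨⟨hN₁V, hN₂V⟩, hn⟩ := hN
  have hn₁ : 1000 ≤ (Fintype.card V : ℝ) := by nlinarith
  have : Nonempty V := Fintype.card_pos_iff.1 (by rify; linarith)
  have hspec := Real.lt_sq_of_sqrt_lt hsqrt
  have hρ := specRad_nonneg G
  have hδρ : δ * specRad G ≤ 1 / 1000000 * specRad G := by gcongr
  have hnρ := card_le_mul_specRad hδ₀.le (by linarith) hn hspec
  have hℓn : ℓ * Fintype.card V ≤ (1 - 2 * ε) * specRad G ^ 2 :=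
    mul_card_le_mul_specRad_sq hε (by nlinarith) hspec hℓ
  rcases hasSpectralGap_or_exists_large_adjEigenvalue G hδ₀.le with
    ⟨i, hgap⟩ | ⟨i, j, hij, hi, hj⟩ | ⟨i, hi⟩
  · exact hN₁ V G i hN₁V hgap hnρ ℓ hℓ₃ (by nlinarith)
  · obtain ⟨H, hHG, k, hτ, hgap⟩ :=
      exists_le_hasSpectralGap_of_two_large (by linarith) (by norm_num; linarith) hij hi hj
    exact (hN₂ V H k hN₂V hgap (by linarith) ℓ hℓ₃
      (hℓn.trans (one_sub_two_mul_mul_sq_le hρ (by linarith) hδε hτ))).mono hHG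
  · exact hasCycleOfLength_of_adjEigenvalue_le hn₁ (by norm_num; linarith) hspec
      (hi.trans (by norm_num; linarith)) hℓ₃ (by nlinarith)
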